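/- arXiv:2604.07227 — 2 statements merged into one kernel-verified Lean document; each statement's English description precedes it below -/
import Mathlib

section
/- Suppose G is a group generated by a finite symmetric set Γ such that the Cayley graph G_Γ is the infinite d-regular tree 𝕋_d with d ≥ 3. Let S be an elephant random walk on G_Γ with memory parameter p ∈ [0,1]. Then for every p ∈ [0,1) and d ≥ 3 there exists a constant ρ = ρ(G, p, d) ∈ (0,1) such that sup_{x∈G} ℙ(S_n = x) ≤ ρⁿ for all n ≥ 1. -/
open MeasureTheory ProbabilityTheory Filter
open scoped ENNReal NNReal

namespace SRRW

variable {Ω : Type*} [MeasurableSpace Ω] {G : Type*} [Group G] [MeasurableSpace G]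

/-- The Cayley graph of `G` with respect to `Γ` (for symmetric `Γ` the adjacency
relation is `x⁻¹ y ∈ Γ`). -/
def cayleyGraph (Γ : Finset G) : SimpleGraph G where
  Adj x y := x ≠ y ∧ (x⁻¹ * y ∈ Γ ∨ y⁻¹ * x ∈ Γ)
  symm := ⟨fun _ _ h => ⟨h.1.symm, h.2.symm⟩⟩
  loopless := ⟨fun _ h => h.1 rfl⟩

/-- The number of past steps, among steps `1, …, n`, which are equal to `s`. -/
noncomputable def pastCount (X : ℕ → Ω → G) (n : ℕ) (s : G) (ω : Ω) : ℕ :=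
  Set.ncard {j : ℕ | 1 ≤ j ∧ j ≤ n ∧ X j ω = s}

/-- The σ-algebra generated by the first `n` steps `X_1, …, X_n`. -/
def pastSigma (X : ℕ → Ω → G) (n : ℕ) : MeasurableSpace Ω :=
  ⨆ j ∈ Set.Icc 1 n, MeasurableSpace.comap (X j) inferInstance

/-- `X` is the step sequence of an elephant random walk on the Cayley graph `G_Γ` with
memory parameter `p`: the first step is uniform on `Γ`; at time `n ≥ 2` the elephant
picks a uniformly chosen past step `g_D` and repeats it with probability `p`, while with
probability `1 - p` it takes a step uniform on `Γ \ {g_D}`.  Equivalently, conditionally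
on the past, `X_n = s` with probability
`p·N_{n-1}(s)/(n-1) + (1-p)·(n-1-N_{n-1}(s))/((|Γ|-1)(n-1))`,
where `N_{n-1}(s)` is the number of past steps equal to `s`. -/
structure IsERW (P : Measure Ω) (p : ℝ) (Γ : Finset G) (X : ℕ → Ω → G) : Prop where
  meas : ∀ n, Measurable (X n)
  mem_steps : ∀ n, 1 ≤ n → ∀ ω, X n ω ∈ Γ
  first_step : ∀ s ∈ Γ, P {ω | X 1 ω = s} = ((Γ.card : ℕ) : ℝ≥0∞)⁻¹
  cond_law : ∀ n, 2 ≤ n → ∀ s ∈ Γ, ∀ A : Set Ω, MeasurableSet[pastSigma X (n - 1)] A →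
    P ({ω | X n ω = s} ∩ A)
      = ∫⁻ ω in A, ENNReal.ofReal
          (p * (pastCount X (n - 1) s ω : ℝ) / ((n : ℝ) - 1)
            + (1 - p) * (((n : ℝ) - 1) - (pastCount X (n - 1) s ω : ℝ))
              / (((Γ.card : ℝ) - 1) * ((n : ℝ) - 1))) ∂P

/-- The position of the walk: `S_n = X_1 · X_2 ⋯ X_n` (ordered product). -/
def pos (X : ℕ → Ω → G) (n : ℕ) (ω : Ω) : G :=
  ((List.range n).map fun k => X (k + 1) ω).prod

end SRRW

open SRRW

/-!
The argument rests on a spectral gap: on the `d`-regular tree the adjacency operator has norm at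
most `2 √(d - 1) < d` on `ℓ²(G)`, so convolution by a step law giving every generator mass at least
`c > 0` contracts `ℓ²(G)` by a factor depending only on `c` and `d`.

The steps of the elephant are not independent, but its step law depends on the past only through
the empirical frequencies of the generators, and these vary slowly. Since every step has conditional
probability at most `q = max p (1 / 2) < 1`, a Chernoff bound shows that after `m` steps all
frequencies are at most some `η < 1` outside an event of exponentially small probability. On each
history of length `m` with this property, every generator has conditional probability bounded below,
and during the next `j ≤ δ m` steps the step law is dominated by a fixed measure, the step law at
time `m` plus `δ` on each generator, whose convolution operator still has norm `r < 1`. Hence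
`P(S_{m+j} = x)` is at most the probability of the bad event plus `r ^ j`. The bound `q` on a single
step absorbs the constant factor for the finitely many small times.
-/

open scoped lp

namespace SRRW

section Tree

variable {V : Type*} {H : SimpleGraph V}

lemma eq_of_adj_of_dist_eq_add_one (hH : H.IsTree) {o x y z : V} (hxy : H.Adj x y)
    (hxz : H.Adj x z) (hy : H.dist o x = H.dist o y + 1) (hz : H.dist o x = H.dist o z + 1) :
    y = z := by
  have eq_penultimate : ∀ (q : H.Walk o x), q.IsPath → ∀ w, H.Adj x w →
      H.dist o x = H.dist o w + 1 → w = q.penultimate := by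
    intro q hq w hxw hw
    obtain ⟨v, -, hv⟩ := hH.connected.exists_path_of_dist o w
    have hpath : (v.concat hxw.symm).IsPath :=
      SimpleGraph.Walk.isPath_of_length_eq_dist _
        (by rw [SimpleGraph.Walk.length_concat, hv, hw])
    rw [← (hH.existsUnique_path o x).unique hpath hq, SimpleGraph.Walk.penultimate_concat]
  obtain ⟨q, hq, -⟩ := hH.connected.exists_path_of_dist o x
  exact (eq_penultimate q hq y hxy hy).trans (eq_penultimate q hq z hxz hz).symm

lemma sum_inv_pow_dist_le (hH : H.IsTree) (o x : V) {r : ℝ} (hr : 1 ≤ r) {T : Finset V}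
    (hT : ∀ y ∈ T, H.Adj x y) :
    ∑ y ∈ T, r⁻¹ ^ H.dist o y ≤ (T.card * r⁻¹ + (r - r⁻¹)) * r⁻¹ ^ H.dist o x := by
  have : 0 < r := one_pos.trans_le hr
  set B := T.filter fun y => H.dist o x = H.dist o y + 1 with hB
  have hBcard : (B.card : ℝ) ≤ 1 := by
    refine Nat.cast_le_one.2 (Finset.card_le_one.2 fun y hy z hz => ?_)
    rw [hB, Finset.mem_filter] at hy hz
    exact eq_of_adj_of_dist_eq_add_one hH (hT y hy.1) (hT z hz.1) hy.2 hz.2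
  have hterm : ∀ y ∈ T, r⁻¹ ^ H.dist o y = r⁻¹ ^ H.dist o x * r⁻¹ +
      if H.dist o x = H.dist o y + 1 then r⁻¹ ^ H.dist o x * (r - r⁻¹) else 0 := by
    intro y hy
    rcases hH.dist_eq_dist_add_one_of_adj o (hT y hy) with h | h
    · rw [if_pos h, h, pow_succ]
      field_simp
      ring
    · rw [if_neg (by lia), h, pow_succ, add_zero]
  have hgain : 0 ≤ r⁻¹ ^ H.dist o x * (r - r⁻¹) :=
    mul_nonneg (by positivity) (sub_nonneg.2 ((inv_le_one_of_one_le₀ hr).trans hr))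
  calc ∑ y ∈ T, r⁻¹ ^ H.dist o y
      = T.card * (r⁻¹ ^ H.dist o x * r⁻¹) + B.card * (r⁻¹ ^ H.dist o x * (r - r⁻¹)) := by
        rw [Finset.sum_congr rfl hterm, Finset.sum_add_distrib, ← Finset.sum_filter]
        simp [hB]
    _ ≤ T.card * (r⁻¹ ^ H.dist o x * r⁻¹) + 1 * (r⁻¹ ^ H.dist o x * (r - r⁻¹)) := by gcongr
    _ = _ := by ring

end Tree

lemma hasSum_sq {α : Type*} (f : ℓ²(α, ℝ)) : HasSum (fun x => f x ^ 2) (‖f‖ ^ 2) := by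
  simpa using lp.hasSum_norm (p := 2) (by norm_num) f

section Convolution

variable {G : Type*} [Group G] {Γ : Finset G} {μ : G → ℝ}

/-- Right translation `f ↦ (x ↦ f (x * s⁻¹))`, as an isometry of `ℓ²(G)`. -/
noncomputable def rightTranslation (s : G) : ℓ²(G, ℝ) →ₗᵢ[ℝ] ℓ²(G, ℝ) where
  toFun f := ⟨fun x => f (x * s⁻¹), (memℓp_gen_iff (by norm_num)).2
    ((Equiv.mulRight s⁻¹).summable_iff.2 ((lp.memℓp f).summable (by norm_num)))⟩
  map_add' _ _ := rfl
  map_smul' _ _ := rfl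
  norm_map' f := by
    rw [lp.norm_eq_tsum_rpow (by norm_num), lp.norm_eq_tsum_rpow (by norm_num)]
    exact congrArg (· ^ _) ((Equiv.mulRight s⁻¹).tsum_eq fun y => ‖f y‖ ^ (2 : ℝ≥0∞).toReal)

/-- Right convolution by the measure `∑ s ∈ Γ, μ s • δ_s`, as an operator on `ℓ²(G)`: if `f` is
the law of a position, its image is the law after one further independent step drawn from `μ`.
For `μ = 1` this is the adjacency operator of the Cayley graph when `Γ` is symmetric. -/
noncomputable def convolution (Γ : Finset G) (μ : G → ℝ) : ℓ²(G, ℝ) →L[ℝ] ℓ²(G, ℝ) :=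
  ∑ s ∈ Γ, μ s • (rightTranslation s).toContinuousLinearMap

lemma convolution_apply (Γ : Finset G) (μ : G → ℝ) (f : ℓ²(G, ℝ)) (x : G) :
    convolution Γ μ f x = ∑ s ∈ Γ, μ s * f (x * s⁻¹) := by
  simp only [convolution, sum_apply, lp.coeFn_sum, Finset.sum_apply]
  rfl

lemma norm_convolution_le_sum (hμ : ∀ s ∈ Γ, 0 ≤ μ s) : ‖convolution Γ μ‖ ≤ ∑ s ∈ Γ, μ s := by
  refine (norm_sum_le _ _).trans (Finset.sum_le_sum fun s hs => ?_)
  rw [norm_smul, Real.norm_of_nonneg (hμ s hs)]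
  exact mul_le_of_le_one_right (hμ s hs) (rightTranslation s).norm_toContinuousLinearMap_le

lemma convolution_add (Γ : Finset G) (μ ν : G → ℝ) :
    convolution Γ (μ + ν) = convolution Γ μ + convolution Γ ν := by
  simp only [convolution, Pi.add_apply, add_smul, Finset.sum_add_distrib]

lemma convolution_smul (Γ : Finset G) (c : ℝ) (μ : G → ℝ) :
    convolution Γ (c • μ) = c • convolution Γ μ := by
  simp only [convolution, Pi.smul_apply, smul_eq_mul, mul_smul, Finset.smul_sum]

lemma norm_convolution_le_of_le {c : ℝ} (hc : 0 ≤ c) (hμ : ∀ s ∈ Γ, c ≤ μ s) :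
    ‖convolution Γ μ‖ ≤ ∑ s ∈ Γ, μ s - c * (Γ.card - ‖convolution Γ 1‖) := by
  have hsplit : μ = c • 1 + (μ - c • 1) := by abel
  have hrest : ‖convolution Γ (μ - c • 1)‖ ≤ ∑ s ∈ Γ, μ s - c * Γ.card := by
    refine (norm_convolution_le_sum fun s hs => by simpa using hμ s hs).trans_eq ?_
    simp [mul_comm]
  calc ‖convolution Γ μ‖ ≤ ‖convolution Γ (c • 1)‖ + ‖convolution Γ (μ - c • 1)‖ := by
        conv_lhs => rw [hsplit, convolution_add]
        exact norm_add_le _ _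
    _ ≤ c * ‖convolution Γ 1‖ + (∑ s ∈ Γ, μ s - c * Γ.card) := by
        rw [convolution_smul, norm_smul, Real.norm_of_nonneg hc]
        gcongr
    _ = _ := by ring

lemma norm_convolution_one_lt_card_of_subset {Γ' : Finset G} (hsub : Γ' ⊆ Γ)
    (h : ‖convolution Γ' 1‖ < Γ'.card) : ‖convolution Γ 1‖ < Γ.card := by
  classical
  have hsplit : convolution Γ 1 = convolution (Γ \ Γ') 1 + convolution Γ' 1 :=
    (Finset.sum_sdiff hsub).symm
  have hcard : ((Γ \ Γ').card : ℝ) + Γ'.card = Γ.card := by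
    exact_mod_cast Finset.card_sdiff_add_card_eq_card hsub
  have hrest : ‖convolution (Γ \ Γ') 1‖ ≤ (Γ \ Γ').card := by
    simpa using norm_convolution_le_sum (Γ := Γ \ Γ') (μ := 1) fun _ _ => zero_le_one
  rw [hsplit, ← hcard]
  exact (norm_add_le _ _).trans_lt (add_lt_add_of_le_of_lt hrest h)

lemma sq_sum_mul_le (hμ : ∀ s ∈ Γ, 0 ≤ μ s) {h : G → ℝ} (hpos : ∀ x, 0 < h x) {L : ℝ} {x : G}
    (hin : ∑ s ∈ Γ, μ s * h (x * s⁻¹) ≤ L * h x) (f : G → ℝ) :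
    (∑ s ∈ Γ, μ s * f (x * s⁻¹)) ^ 2
      ≤ L * ∑ s ∈ Γ, μ s * (h x / h (x * s⁻¹)) * f (x * s⁻¹) ^ 2 := by
  have hsum : ∑ s ∈ Γ, μ s * (h (x * s⁻¹) / h x) ≤ L := by
    simp only [← mul_div_assoc]
    rw [← Finset.sum_div, div_le_iff₀ (hpos x)]
    exact hin
  have hnonneg : ∀ s ∈ Γ, ∀ y z, 0 ≤ μ s * (h y / h z) := fun s hs y z =>
    mul_nonneg (hμ s hs) (div_pos (hpos y) (hpos z)).le
  have hnonneg' : ∀ s ∈ Γ, 0 ≤ μ s * (h x / h (x * s⁻¹)) * f (x * s⁻¹) ^ 2 := fun s hs =>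
    mul_nonneg (hnonneg s hs _ _) (sq_nonneg _)
  refine (Finset.sum_sq_le_sum_mul_sum_of_sq_le_mul Γ (fun s hs => hnonneg s hs _ _) hnonneg'
    fun s _ => ?_).trans (mul_le_mul_of_nonneg_right hsum (Finset.sum_nonneg hnonneg'))
  have := hpos x
  have := hpos (x * s⁻¹)
  exact le_of_eq (by field_simp)

lemma hasSum_sq_sum_mul_le (hμ : ∀ s ∈ Γ, 0 ≤ μ s) {h : G → ℝ} (hpos : ∀ x, 0 < h x) {L : ℝ}
    (hL : 0 ≤ L) (hin : ∀ x, ∑ s ∈ Γ, μ s * h (x * s⁻¹) ≤ L * h x)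
    (hout : ∀ x, ∑ s ∈ Γ, μ s * h (x * s) ≤ L * h x) {f : G → ℝ} {a b : ℝ}
    (ha : HasSum (fun x => f x ^ 2) a)
    (hb : HasSum (fun x => (∑ s ∈ Γ, μ s * f (x * s⁻¹)) ^ 2) b) : b ≤ L * (L * a) := by
  let F : G → G → ℝ := fun s y => μ s * (h (y * s) / h y) * f y ^ 2
  have hF_nonneg : ∀ s ∈ Γ, ∀ y, 0 ≤ F s y := fun s hs y =>
    mul_nonneg (mul_nonneg (hμ s hs) (div_pos (hpos _) (hpos y)).le) (sq_nonneg _)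
  have hF_le : ∀ y, ∑ s ∈ Γ, F s y ≤ L * f y ^ 2 := fun y => by
    simp only [F, ← mul_div_assoc]
    rw [← Finset.sum_mul, ← Finset.sum_div]
    exact mul_le_mul_of_nonneg_right ((div_le_iff₀ (hpos y)).2 (hout y)) (sq_nonneg _)
  have hF_summable : ∀ s ∈ Γ, Summable (F s) := fun s hs =>
    .of_nonneg_of_le (hF_nonneg s hs)
      (fun y => (Finset.single_le_sum (fun t ht => hF_nonneg t ht y) hs).trans (hF_le y))
      (ha.summable.mul_left L)
  have hshift : HasSum (fun x => ∑ s ∈ Γ, F s (x * s⁻¹)) (∑ s ∈ Γ, ∑' y, F s y) :=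
    hasSum_sum fun s hs =>
      (Equiv.hasSum_iff (f := F s) (Equiv.mulRight s⁻¹)).2 (hF_summable s hs).hasSum
  calc b ≤ L * ∑ s ∈ Γ, ∑' y, F s y := by
        refine hasSum_le (fun x => ?_) hb (hshift.mul_left L)
        simpa only [F, inv_mul_cancel_right] using sq_sum_mul_le hμ hpos (hin x) f
    _ ≤ L * (L * a) := by
        gcongr
        exact hasSum_le hF_le (hasSum_sum fun s hs => (hF_summable s hs).hasSum) (ha.mul_left L)

/-- The **Schur test** with weight `h`. -/
lemma norm_convolution_le_of_weight (hμ : ∀ s ∈ Γ, 0 ≤ μ s) {h : G → ℝ} (hpos : ∀ x, 0 < h x)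
    {L : ℝ} (hin : ∀ x, ∑ s ∈ Γ, μ s * h (x * s⁻¹) ≤ L * h x)
    (hout : ∀ x, ∑ s ∈ Γ, μ s * h (x * s) ≤ L * h x) : ‖convolution Γ μ‖ ≤ L := by
  have hL : 0 ≤ L := nonneg_of_mul_nonneg_left
    ((Finset.sum_nonneg fun s hs => mul_nonneg (hμ s hs) (hpos _).le).trans (hout 1)) (hpos 1)
  refine ContinuousLinearMap.opNorm_le_bound _ hL fun f => ?_
  have hconv := hasSum_sq (convolution Γ μ f)
  simp only [convolution_apply] at hconv
  refine le_of_sq_le_sq ?_ (mul_nonneg hL (norm_nonneg f))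
  exact (hasSum_sq_sum_mul_le hμ hpos hL hin hout (hasSum_sq f) hconv).trans_eq (by ring)

end Convolution

section CayleyTree

variable {G : Type*} [Group G] [DecidableEq G] {Γ : Finset G}

lemma cayleyGraph_adj_mul_right {s : G} (hs : s ∈ Γ.erase 1) (x : G) :
    (cayleyGraph Γ).Adj x (x * s) ∧ (cayleyGraph Γ).Adj x (x * s⁻¹) := by
  obtain ⟨hs1, hsΓ⟩ := Finset.mem_erase.1 hs
  exact ⟨⟨by simpa using hs1, by simp [hsΓ]⟩, ⟨by simpa using hs1, by simp [hsΓ]⟩⟩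

lemma ncard_neighborSet_cayleyGraph (hsymm : ∀ s ∈ Γ, s⁻¹ ∈ Γ) (x : G) :
    ((cayleyGraph Γ).neighborSet x).ncard = (Γ.erase 1).card := by
  rw [← Finset.card_image_of_injective (Γ.erase 1) (mul_right_injective x),
    ← Set.ncard_coe_finset]
  congr 1
  ext y
  have hiff : x⁻¹ * y ∈ Γ ∨ y⁻¹ * x ∈ Γ ↔ x⁻¹ * y ∈ Γ :=
    or_iff_left_of_imp fun h => by simpa using hsymm _ h
  simp only [SimpleGraph.mem_neighborSet, cayleyGraph, hiff, Finset.coe_image, Set.mem_image,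
    Finset.mem_coe, Finset.mem_erase]
  constructor
  · exact fun ⟨hne, h⟩ => ⟨x⁻¹ * y, ⟨by simpa [inv_mul_eq_one] using hne, h⟩, by simp⟩
  · rintro ⟨s, ⟨hs1, hs⟩, rfl⟩
    exact ⟨by simpa using hs1, by simpa using hs⟩

/-- The weight `r ^ (-dist 1 x)` with `r = √(d - 1)` gives `‖A‖ ≤ 2 √(d - 1)` for the adjacency
operator of the `d`-regular tree (Kesten), and `2 √(d - 1) < d` as soon as `d ≠ 2`. -/
lemma norm_convolution_one_lt_card_of_isTree (htree : (cayleyGraph Γ).IsTree)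
    (hcard : 3 ≤ (Γ.erase 1).card) : ‖convolution Γ 1‖ < Γ.card := by
  refine norm_convolution_one_lt_card_of_subset (Γ.erase_subset 1) ?_
  set k : ℝ := ((Γ.erase 1).card : ℝ) with hk
  set r := √(k - 1) with hr
  have hk3 : 3 ≤ k := Nat.ofNat_le_cast.2 hcard
  have hrsq : r ^ 2 = k - 1 := Real.sq_sqrt (by linarith)
  have hr1 : 1 < r := by rw [hr, Real.lt_sqrt zero_le_one]; linarith
  have hweight : ∀ (e : G → G), e.Injective →
      (∀ s ∈ Γ.erase 1, ∀ x, (cayleyGraph Γ).Adj x (x * e s)) → ∀ x,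
      ∑ s ∈ Γ.erase 1, (1 : G → ℝ) s * r⁻¹ ^ (cayleyGraph Γ).dist 1 (x * e s)
        ≤ 2 * r * r⁻¹ ^ (cayleyGraph Γ).dist 1 x := by
    intro e he hadj x
    have hT : ∀ y ∈ (Γ.erase 1).map ⟨fun s => x * e s, (mul_right_injective x).comp he⟩,
        (cayleyGraph Γ).Adj x y := by
      simp only [Finset.mem_map, Function.Embedding.coeFn_mk, forall_exists_index, and_imp]
      rintro _ s hs rfl
      exact hadj s hs x
    have h := sum_inv_pow_dist_le htree 1 x hr1.le hT
    rw [Finset.sum_map, Finset.card_map, ← hk] at h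
    have hrate : k * r⁻¹ + (r - r⁻¹) = 2 * r := by field_simp; linarith
    simpa [hrate] using h
  calc ‖convolution (Γ.erase 1) 1‖ ≤ 2 * r :=
        norm_convolution_le_of_weight (h := fun x => r⁻¹ ^ (cayleyGraph Γ).dist 1 x)
          (fun _ _ => zero_le_one) (fun x => by positivity)
          (hweight _ inv_injective fun s hs x => (cayleyGraph_adj_mul_right hs x).2)
          (hweight id Function.injective_id fun s hs x => (cayleyGraph_adj_mul_right hs x).1)
    _ < k := by nlinarith

end CayleyTree

section StepLaw

variable {p k t t' : ℝ}

/-- The conditional probability, given the past, that the next step of an elephant random walk on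
a group with `k` generators is a given generator, as a function of the fraction `t` of the past
steps equal to that generator. -/
noncomputable def stepProb (p k t : ℝ) : ℝ := p * t + (1 - p) * (1 - t) / (k - 1)

lemma stepProb_le_max (hp : p ∈ Set.Icc 0 1) (hk : 3 ≤ k) (ht : t ∈ Set.Icc 0 1) :
    stepProb p k t ≤ max p (1 / 2) := by
  have huniform : (1 - p) / (k - 1) ≤ max p (1 / 2) :=
    ((div_le_div_iff₀ (by linarith) two_pos).2 (by nlinarith [hp.1])).trans (le_max_right _ _)
  calc stepProb p k t = t * p + (1 - t) * ((1 - p) / (k - 1)) := by unfold stepProb; ring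
    _ ≤ t * max p (1 / 2) + (1 - t) * max p (1 / 2) := by
        gcongr
        exacts [ht.1, le_max_left _ _, sub_nonneg.2 ht.2]
    _ = max p (1 / 2) := by ring

lemma le_stepProb (hp : p ∈ Set.Icc 0 1) (hk : 1 < k) (ht : 0 ≤ t) (htt' : t ≤ t') :
    (1 - p) * (1 - t') / (k - 1) ≤ stepProb p k t := by
  have : 0 < k - 1 := sub_pos.2 hk
  have : 0 ≤ 1 - p := sub_nonneg.2 hp.2
  refine le_add_of_nonneg_of_le (mul_nonneg hp.1 ht) ?_
  gcongr

lemma stepProb_le_add_abs (hp : p ∈ Set.Icc 0 1) (hk : 2 ≤ k) (t t' : ℝ) :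
    stepProb p k t' ≤ stepProb p k t + |t' - t| := by
  have hslope : |p - (1 - p) / (k - 1)| ≤ 1 := by
    have hnonneg : 0 ≤ (1 - p) / (k - 1) := div_nonneg (sub_nonneg.2 hp.2) (by linarith)
    have hle : (1 - p) / (k - 1) ≤ 1 := (div_le_one (by linarith)).2 (by linarith [hp.1])
    exact abs_sub_le_of_le_of_le hp.1 hp.2 hnonneg hle |>.trans_eq (by ring)
  calc stepProb p k t' = stepProb p k t + (p - (1 - p) / (k - 1)) * (t' - t) := by
        unfold stepProb; ring
    _ ≤ stepProb p k t + 1 * |t' - t| := by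
        refine add_le_add le_rfl ((le_abs_self _).trans ?_)
        exact (abs_mul _ _).trans_le (mul_le_mul_of_nonneg_right hslope (abs_nonneg _))
    _ = _ := by rw [one_mul]

lemma sum_stepProb {α : Type*} {T : Finset α} (hT : 1 < T.card) {f : α → ℝ}
    (hf : ∑ a ∈ T, f a = 1) : ∑ a ∈ T, stepProb p T.card (f a) = 1 := by
  have hT' : (T.card : ℝ) - 1 ≠ 0 := (sub_pos.2 (Nat.one_lt_cast.2 hT)).ne'
  simp only [stepProb, Finset.sum_add_distrib, ← Finset.sum_div, ← Finset.mul_sum,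
    Finset.sum_sub_distrib, hf, Finset.sum_const, nsmul_eq_mul, mul_one]
  field_simp
  ring

end StepLaw

section Counts

variable {Ω G : Type*} {X : ℕ → Ω → G} {n : ℕ} {s : G} {ω : Ω}

lemma pastCount_eq_card [DecidableEq G] (X : ℕ → Ω → G) (n : ℕ) (s : G) (ω : Ω) :
    pastCount X n s ω = ((Finset.Icc 1 n).filter fun j => X j ω = s).card := by
  rw [pastCount, ← Set.ncard_coe_finset]
  simp [and_assoc]

lemma pastCount_succ [DecidableEq G] (X : ℕ → Ω → G) (n : ℕ) (s : G) (ω : Ω) :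
    pastCount X (n + 1) s ω = pastCount X n s ω + if X (n + 1) ω = s then 1 else 0 := by
  rw [pastCount_eq_card, pastCount_eq_card, ← Finset.insert_Icc_right_eq_Icc_add_one (by lia),
    Finset.filter_insert]
  split_ifs <;> simp

lemma pastCount_le : pastCount X n s ω ≤ n := by
  classical
  rw [pastCount_eq_card]
  exact (Finset.card_filter_le _ _).trans_eq (by simp)

lemma pastCount_mono (X : ℕ → Ω → G) (s : G) (ω : Ω) : Monotone fun n => pastCount X n s ω := by
  classical
  refine monotone_nat_of_le_succ fun n => ?_
  rw [pastCount_succ]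
  exact Nat.le_add_right _ _

lemma pastCount_add_le (X : ℕ → Ω → G) (n j : ℕ) (s : G) (ω : Ω) :
    pastCount X (n + j) s ω ≤ pastCount X n s ω + j := by
  classical
  induction j with
  | zero => rfl
  | succ j ih =>
    rw [← add_assoc, pastCount_succ]
    split_ifs <;> lia

lemma sum_pastCount {Γ : Finset G} (hmem : ∀ j, 1 ≤ j → X j ω ∈ Γ) :
    ∑ s ∈ Γ, pastCount X n s ω = n := by
  classical
  simp only [pastCount_eq_card]
  rw [← Finset.card_eq_sum_card_fiberwise fun j hj => hmem j (Finset.mem_Icc.1 hj).1]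
  simp

/-- The fraction of the first `n` steps which are equal to `s` (equal to `0` when `n = 0`). -/
noncomputable def frequency (X : ℕ → Ω → G) (n : ℕ) (s : G) (ω : Ω) : ℝ := pastCount X n s ω / n

lemma frequency_mem_Icc : frequency X n s ω ∈ Set.Icc 0 1 :=
  ⟨by unfold frequency; positivity,
    div_le_one_of_le₀ (Nat.cast_le.2 pastCount_le) (Nat.cast_nonneg n)⟩

lemma sum_frequency {Γ : Finset G} (hmem : ∀ j, 1 ≤ j → X j ω ∈ Γ) (hn : 1 ≤ n) :
    ∑ s ∈ Γ, frequency X n s ω = 1 := by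
  simp only [frequency]
  rw [← Finset.sum_div, ← Nat.cast_sum, sum_pastCount hmem, div_self (by positivity)]

lemma abs_frequency_add_sub_le (hn : 1 ≤ n) (j : ℕ) :
    |frequency X (n + j) s ω - frequency X n s ω| ≤ j / n := by
  have hn' : (0 : ℝ) < n := Nat.cast_pos.2 hn
  have hmono : (pastCount X n s ω : ℝ) ≤ pastCount X (n + j) s ω :=
    Nat.cast_le.2 (pastCount_mono X s ω (Nat.le_add_right n j))
  have hadd : (pastCount X (n + j) s ω : ℝ) ≤ pastCount X n s ω + j := by
    exact_mod_cast pastCount_add_le X n j s ω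
  have hdiff : frequency X (n + j) s ω - frequency X n s ω =
      (pastCount X (n + j) s ω - pastCount X n s ω - j * frequency X n s ω) / (n + j) := by
    simp only [frequency, Nat.cast_add]
    field_simp
    ring
  have hnum : |(pastCount X (n + j) s ω - pastCount X n s ω - j * frequency X n s ω : ℝ)| ≤ j :=
    (abs_sub_le_of_le_of_le (sub_nonneg.2 hmono) (sub_le_iff_le_add'.2 hadd)
      (mul_nonneg (Nat.cast_nonneg j) frequency_mem_Icc.1)
      (mul_le_of_le_one_right (Nat.cast_nonneg j) frequency_mem_Icc.2)).trans_eq (sub_zero _)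
  rw [hdiff, abs_div, abs_of_pos (by positivity : (0 : ℝ) < n + j)]
  exact div_le_div₀ (Nat.cast_nonneg j) hnum hn' (le_add_of_nonneg_right (Nat.cast_nonneg j))

end Counts

section History

variable {Ω G : Type*} {X : ℕ → Ω → G}

/-- The first `n` steps `X_1, …, X_n` of a walk (so that the time index is shifted by one). -/
def history (X : ℕ → Ω → G) (n : ℕ) (ω : Ω) : Fin n → G := fun i => X (i + 1) ω

lemma step_eq_of_history_eq {n j : ℕ} {ω ω' : Ω} (h : history X n ω = history X n ω')
    (hj : j ∈ Set.Icc 1 n) : X j ω = X j ω' := by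
  have := congrFun h ⟨j - 1, by have := hj.1; have := hj.2; lia⟩
  simpa only [history, Nat.sub_add_cancel hj.1] using this

lemma factorsThrough_pastCount (X : ℕ → Ω → G) (n : ℕ) (s : G) :
    (pastCount X n s).FactorsThrough (history X n) := by
  classical
  intro ω ω' h
  rw [pastCount_eq_card, pastCount_eq_card]
  congr 1
  refine Finset.filter_congr fun j hj => ?_
  rw [step_eq_of_history_eq h (Finset.mem_Icc.1 hj)]

lemma factorsThrough_pos [Group G] (X : ℕ → Ω → G) (n : ℕ) :
    (pos X n).FactorsThrough (history X n) := by
  intro ω ω' h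
  refine congrArg List.prod (List.map_congr_left fun k hk => ?_)
  exact step_eq_of_history_eq h ⟨Nat.le_add_left 1 k, List.mem_range.1 hk⟩

lemma pos_succ [Group G] (X : ℕ → Ω → G) (n : ℕ) (ω : Ω) :
    pos X (n + 1) ω = pos X n ω * X (n + 1) ω := by
  simp [pos, List.range_succ]

lemma history_mem_piFinset {Γ : Finset G} {ω : Ω} (hmem : ∀ j, 1 ≤ j → X j ω ∈ Γ) (n : ℕ) :
    history X n ω ∈ Fintype.piFinset fun _ => Γ :=
  Fintype.mem_piFinset.2 fun i => hmem _ (Nat.le_add_left 1 i)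

variable [MeasurableSpace G]

lemma pastSigma_mono (X : ℕ → Ω → G) : Monotone (pastSigma X) := fun _ _ h =>
  biSup_mono fun _ hj => ⟨hj.1, hj.2.trans h⟩

lemma pastSigma_le [MeasurableSpace Ω] (hX : ∀ n, Measurable (X n)) (n : ℕ) :
    pastSigma X n ≤ ‹MeasurableSpace Ω› :=
  iSup₂_le fun j _ => (hX j).comap_le

variable [MeasurableSingletonClass G]

lemma measurableSet_history_fiber (n : ℕ) (w : Fin n → G) :
    MeasurableSet[pastSigma X n] (history X n ⁻¹' {w}) := by
  have hinter : history X n ⁻¹' {w} = ⋂ i : Fin n, X (i + 1) ⁻¹' {w i} := by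
    ext ω
    simp [history, funext_iff]
  rw [hinter]
  refine MeasurableSet.iInter fun i => ?_
  have hle : MeasurableSpace.comap (X (i + 1)) ‹_› ≤ pastSigma X n :=
    le_iSup₂_of_le (↑i + 1) ⟨Nat.le_add_left 1 i, i.2⟩ le_rfl
  exact hle _ ⟨{w i}, measurableSet_singleton _, rfl⟩

lemma measurable_pastSigma_of_factorsThrough {Γ : Finset G}
    (hmem : ∀ j, 1 ≤ j → ∀ ω, X j ω ∈ Γ) {n : ℕ} {β : Type*} [MeasurableSpace β] {f : Ω → β}
    (hf : f.FactorsThrough (history X n)) : Measurable[pastSigma X n] f := by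
  intro U _
  have hunion : f ⁻¹' U = ⋃ w ∈ history X n '' (f ⁻¹' U), history X n ⁻¹' {w} := by
    ext ω
    simp only [Set.mem_iUnion, Set.mem_preimage, Set.mem_singleton_iff, exists_prop,
      exists_eq_right', Set.mem_image]
    exact ⟨fun h => ⟨ω, h, rfl⟩, fun ⟨ω', h, hω⟩ => hf hω ▸ h⟩
  have hfinite : (history X n '' (f ⁻¹' U)).Finite := by
    refine (Fintype.piFinset fun _ => Γ).finite_toSet.subset ?_
    rintro _ ⟨ω, -, rfl⟩
    exact history_mem_piFinset (fun j hj => hmem j hj ω) n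
  rw [hunion]
  exact hfinite.measurableSet_biUnion fun w _ => measurableSet_history_fiber n w

end History

lemma measureReal_le_add_of_fiber {Ω α : Type*} [MeasurableSpace Ω] {P : Measure Ω}
    [IsProbabilityMeasure P] {f : Ω → α} {W : Finset α} (hW : ∀ ω, f ω ∈ W)
    (hf : ∀ w, MeasurableSet (f ⁻¹' {w})) (B : Set Ω) {E : Set Ω} {R : ℝ} (hR : 0 ≤ R)
    (h : ∀ ω ∉ B, P.real (f ⁻¹' {f ω} ∩ E) ≤ P.real (f ⁻¹' {f ω}) * R) :
    P.real E ≤ P.real B + R := by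
  classical
  set W' := W.filter fun w => ∃ ω ∉ B, f ω = w
  have hcover : E ⊆ B ∪ ⋃ w ∈ W', f ⁻¹' {w} ∩ E := by
    intro ω hω
    refine or_iff_not_imp_left.2 fun hB => Set.mem_biUnion (x := f ω) ?_ ⟨rfl, hω⟩
    exact Finset.mem_filter.2 ⟨hW ω, ω, hB, rfl⟩
  have htotal : ∑ w ∈ W', P.real (f ⁻¹' {w}) ≤ 1 := by
    rw [← measureReal_biUnion_finset (fun w _ w' _ hww' => ?_) fun w _ => hf w]
    · exact measureReal_le_one
    · exact Set.disjoint_left.2 fun ω hω hω' => hww' (hω.symm.trans hω')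
  calc P.real E ≤ P.real B + ∑ w ∈ W', P.real (f ⁻¹' {w} ∩ E) :=
        (measureReal_mono hcover).trans <| (measureReal_union_le _ _).trans <|
          add_le_add le_rfl (measureReal_biUnion_finset_le _ _)
    _ ≤ P.real B + ∑ w ∈ W', P.real (f ⁻¹' {w}) * R := by
        gcongr with w hw
        obtain ⟨-, ω, hω, rfl⟩ := Finset.mem_filter.1 hw
        exact h ω hω
    _ ≤ P.real B + R := by
        rw [← Finset.sum_mul]
        exact add_le_add le_rfl (mul_le_of_le_one_left hR htotal)

namespace IsERW

variable {Ω : Type*} [MeasurableSpace Ω] {G : Type*} [MeasurableSpace G]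
  {P : Measure Ω} {p : ℝ} {Γ : Finset G} {X : ℕ → Ω → G} {n : ℕ} {s : G}

lemma measure_step_inter (hX : IsERW P p Γ X) (hn : 1 ≤ n) (hs : s ∈ Γ) {A : Set Ω}
    (hA : MeasurableSet[pastSigma X n] A) :
    P ({ω | X (n + 1) ω = s} ∩ A)
      = ∫⁻ ω in A, ENNReal.ofReal (stepProb p Γ.card (frequency X n s ω)) ∂P := by
  rw [hX.cond_law (n + 1) (by lia) s hs A hA]
  congr! 3 with ω
  have : (n : ℝ) ≠ 0 := by positivity
  rw [Nat.add_sub_cancel, stepProb, frequency, Nat.cast_add_one, add_sub_cancel_right]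
  field_simp

variable [IsProbabilityMeasure P]

lemma measureReal_step_inter_le (hX : IsERW P p Γ X) (hn : 1 ≤ n) (hs : s ∈ Γ) {A : Set Ω}
    (hA : MeasurableSet[pastSigma X n] A) {Q : ℝ} (hQ : 0 ≤ Q)
    (hstep : ∀ ω ∈ A, stepProb p Γ.card (frequency X n s ω) ≤ Q) :
    P.real ({ω | X (n + 1) ω = s} ∩ A) ≤ Q * P.real A := by
  refine ENNReal.toReal_le_of_le_ofReal (by positivity) ?_
  rw [hX.measure_step_inter hn hs hA, ENNReal.ofReal_mul hQ, ofReal_measureReal]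
  refine (setLIntegral_mono' (pastSigma_le hX.meas n _ hA) fun ω hω =>
    ENNReal.ofReal_le_ofReal (hstep ω hω)).trans_eq ?_
  rw [setLIntegral_const]

lemma measureReal_step_inter_le_max (hX : IsERW P p Γ X) (hp : p ∈ Set.Icc 0 1)
    (hΓ : 3 ≤ Γ.card) (hs : s ∈ Γ) {A : Set Ω} (hA : MeasurableSet[pastSigma X n] A) :
    P.real ({ω | X (n + 1) ω = s} ∩ A) ≤ max p (1 / 2) * P.real A := by
  have hΓ' : (3 : ℝ) ≤ Γ.card := Nat.ofNat_le_cast.2 hΓ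
  rcases n.eq_zero_or_pos with rfl | hn
  · have hbot : pastSigma X 0 = ⊥ := by simp [pastSigma]
    rw [hbot, MeasurableSpace.measurableSet_bot_iff] at hA
    obtain rfl | rfl := hA
    · simp
    · rw [Set.inter_univ, measureReal_def, zero_add, hX.first_step s hs, probReal_univ, mul_one,
        ENNReal.toReal_inv, ENNReal.toReal_natCast, inv_eq_one_div]
      exact (one_div_le_one_div_of_le two_pos (by linarith)).trans (le_max_right _ _)
  · exact hX.measureReal_step_inter_le hn hs hA (le_max_of_le_left hp.1) fun ω _ =>
      stepProb_le_max hp hΓ' frequency_mem_Icc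

lemma setLIntegral_step_le (hX : IsERW P p Γ X) (hp : p ∈ Set.Icc 0 1) (hΓ : 3 ≤ Γ.card)
    (hs : s ∈ Γ) {f : Ω → ℝ≥0∞} (hf : Measurable[pastSigma X n] f) :
    ∫⁻ ω in {ω | X (n + 1) ω = s}, f ω ∂P ≤ ENNReal.ofReal (max p (1 / 2)) * ∫⁻ ω, f ω ∂P := by
  have hm := pastSigma_le hX.meas n
  have hle : (P.restrict {ω | X (n + 1) ω = s}).trim hm
      ≤ ENNReal.ofReal (max p (1 / 2)) • P.trim hm := by
    refine Measure.le_iff.2 fun A hA => ?_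
    rw [Measure.smul_apply, smul_eq_mul, trim_measurableSet_eq hm hA, trim_measurableSet_eq hm hA,
      Measure.restrict_apply (hm _ hA), Set.inter_comm, ← ofReal_measureReal,
      ← ofReal_measureReal (s := A), ← ENNReal.ofReal_mul (le_max_of_le_left hp.1)]
    exact ENNReal.ofReal_le_ofReal (hX.measureReal_step_inter_le_max hp hΓ hs hA)
  calc ∫⁻ ω in {ω | X (n + 1) ω = s}, f ω ∂P
      = ∫⁻ ω, f ω ∂(P.restrict {ω | X (n + 1) ω = s}).trim hm := (lintegral_trim hm hf).symm
    _ ≤ ∫⁻ ω, f ω ∂(ENNReal.ofReal (max p (1 / 2)) • P.trim hm) := lintegral_mono' hle le_rfl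
    _ = _ := by rw [lintegral_smul_measure, lintegral_trim hm hf, smul_eq_mul]

variable [MeasurableSingletonClass G]

lemma lintegral_two_pow_pastCount_le (hX : IsERW P p Γ X) (hp : p ∈ Set.Icc 0 1)
    (hΓ : 3 ≤ Γ.card) (hs : s ∈ Γ) (n : ℕ) :
    ∫⁻ ω, 2 ^ pastCount X n s ω ∂P ≤ (1 + ENNReal.ofReal (max p (1 / 2))) ^ n := by
  classical
  induction n with
  | zero => simp [pastCount_eq_card]
  | succ n ih =>
    have hf : Measurable[pastSigma X n] fun ω => (2 : ℝ≥0∞) ^ pastCount X n s ω :=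
      measurable_pastSigma_of_factorsThrough hX.mem_steps
        ((factorsThrough_pastCount X n s).comp_left _)
    have hB : MeasurableSet {ω | X (n + 1) ω = s} := hX.meas _ (measurableSet_singleton s)
    have hsplit : ∀ ω, (2 : ℝ≥0∞) ^ pastCount X (n + 1) s ω = 2 ^ pastCount X n s ω
        + {ω | X (n + 1) ω = s}.indicator (fun ω => 2 ^ pastCount X n s ω) ω := by
      intro ω
      rw [pastCount_succ]
      by_cases h : X (n + 1) ω = s
      · simp [h, pow_succ, mul_two]
      · simp [h]
    simp only [hsplit]
    rw [lintegral_add_left (hf.mono (pastSigma_le hX.meas n) le_rfl), lintegral_indicator hB]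
    calc _ ≤ ∫⁻ ω, 2 ^ pastCount X n s ω ∂P
          + ENNReal.ofReal (max p (1 / 2)) * ∫⁻ ω, 2 ^ pastCount X n s ω ∂P :=
          add_le_add le_rfl (hX.setLIntegral_step_le hp hΓ hs hf)
      _ = (∫⁻ ω, 2 ^ pastCount X n s ω ∂P) * (1 + ENNReal.ofReal (max p (1 / 2))) := by ring
      _ ≤ _ := by rw [pow_succ]; gcongr

lemma measureReal_le_frequency_le (hX : IsERW P p Γ X) (hp : p ∈ Set.Icc 0 1)
    (hΓ : 3 ≤ Γ.card) (hs : s ∈ Γ) (η : ℝ) (hn : 1 ≤ n) :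
    P.real {ω | η ≤ frequency X n s ω} ≤ ((1 + max p (1 / 2)) / 2 ^ η) ^ n := by
  have hf : Measurable fun ω => (2 : ℝ≥0∞) ^ pastCount X n s ω :=
    (measurable_pastSigma_of_factorsThrough hX.mem_steps
      ((factorsThrough_pastCount X n s).comp_left _)).mono (pastSigma_le hX.meas n) le_rfl
  have hq : 0 ≤ max p (1 / 2) := le_max_of_le_left hp.1
  have hmarkov : ENNReal.ofReal ((2 ^ η) ^ n) * P {ω | η ≤ frequency X n s ω}
      ≤ ENNReal.ofReal ((1 + max p (1 / 2)) ^ n) := by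
    calc _ ≤ ENNReal.ofReal ((2 ^ η) ^ n)
          * P {ω | ENNReal.ofReal ((2 ^ η) ^ n) ≤ 2 ^ pastCount X n s ω} := by
          gcongr with ω
          intro hω
          rw [frequency, le_div_iff₀ (by positivity)] at hω
          have : ((2 : ℝ) ^ η) ^ n ≤ 2 ^ pastCount X n s ω := by
            rw [← Real.rpow_mul_natCast zero_le_two, ← Real.rpow_natCast 2 (pastCount X n s ω)]
            exact Real.rpow_le_rpow_of_exponent_le one_le_two hω
          refine (ENNReal.ofReal_le_ofReal this).trans_eq ?_
          rw [ENNReal.ofReal_pow zero_le_two, ENNReal.ofReal_ofNat]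
      _ ≤ (1 + ENNReal.ofReal (max p (1 / 2))) ^ n :=
          (mul_meas_ge_le_lintegral hf _).trans
            (hX.lintegral_two_pow_pastCount_le hp hΓ hs n)
      _ = _ := by
          rw [ENNReal.ofReal_pow (by positivity), ENNReal.ofReal_add zero_le_one hq,
            ENNReal.ofReal_one]
  rw [← ofReal_measureReal, ← ENNReal.ofReal_mul (by positivity),
    ENNReal.ofReal_le_ofReal_iff (by positivity)] at hmarkov
  rw [div_pow, le_div_iff₀' (by positivity)]
  exact hmarkov

lemma measureReal_pos_le_max [Group G] (hX : IsERW P p Γ X) (hp : p ∈ Set.Icc 0 1) (hΓ : 3 ≤ Γ.card)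
    (hn : 1 ≤ n) (x : G) : P.real {ω | pos X n ω = x} ≤ max p (1 / 2) := by
  obtain ⟨m, rfl⟩ := Nat.exists_eq_add_of_le' hn
  have hfiber : ∀ ω, P.real (history X m ⁻¹' {history X m ω} ∩ {ω | pos X (m + 1) ω = x})
      ≤ P.real (history X m ⁻¹' {history X m ω}) * max p (1 / 2) := by
    intro ω
    set s := (pos X m ω)⁻¹ * x
    have hsub : history X m ⁻¹' {history X m ω} ∩ {ω | pos X (m + 1) ω = x} ⊆
        {ω | X (m + 1) ω = s} ∩ history X m ⁻¹' {history X m ω} := by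
      rintro ω' ⟨hω', hx⟩
      refine ⟨?_, hω'⟩
      rw [Set.mem_ofPred_eq, pos_succ, factorsThrough_pos X m hω'] at hx
      exact eq_inv_mul_of_mul_eq hx
    by_cases hs : s ∈ Γ
    · rw [mul_comm]
      exact (measureReal_mono hsub).trans
        (hX.measureReal_step_inter_le_max hp hΓ hs (measurableSet_history_fiber m _))
    · rw [Set.subset_eq_empty hsub (Set.eq_empty_of_forall_notMem fun ω' h =>
        hs (h.1 ▸ hX.mem_steps _ hn ω')), measureReal_empty]
      have := hp.1
      positivity
  simpa using measureReal_le_add_of_fiber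
    (fun ω => history_mem_piFinset (fun j hj => hX.mem_steps j hj ω) m)
    (fun w => pastSigma_le hX.meas m _ (measurableSet_history_fiber m w)) ∅
    (le_max_of_le_left hp.1) fun ω _ => hfiber ω

end IsERW

lemma norm_convolution_stepProb_add_le {G : Type*} [Group G] {Γ : Finset G} (hΓ : 2 ≤ Γ.card)
    {p η δ : ℝ} (hp : p ∈ Set.Icc 0 1) (hη : η ≤ 1) (hδ : 0 ≤ δ) {t : G → ℝ}
    (ht : ∀ s ∈ Γ, t s ∈ Set.Icc 0 η) (hsum : ∑ s ∈ Γ, t s = 1) :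
    ‖convolution Γ fun s => stepProb p Γ.card (t s) + δ‖ ≤ 1 + δ * Γ.card
      - (1 - p) * (1 - η) / (Γ.card - 1) * (Γ.card - ‖convolution Γ 1‖) := by
  have hΓ' : (1 : ℝ) < Γ.card := Nat.one_lt_cast.2 hΓ
  have hc : 0 ≤ (1 - p) * (1 - η) / (Γ.card - 1) :=
    div_nonneg (mul_nonneg (sub_nonneg.2 hp.2) (sub_nonneg.2 hη)) (sub_nonneg.2 hΓ'.le)
  refine (norm_convolution_le_of_le hc fun s hs => ?_).trans_eq ?_
  · exact le_add_of_le_of_nonneg (le_stepProb hp hΓ' (ht s hs).1 (ht s hs).2) hδ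
  · rw [Finset.sum_add_distrib, sum_stepProb hΓ hsum, Finset.sum_const, nsmul_eq_mul, mul_comm δ]

lemma exists_norm_convolution_stepProb_add_le {G : Type*} [Group G] {Γ : Finset G}
    (hΓ : 2 ≤ Γ.card) (hgap : ‖convolution Γ 1‖ < Γ.card) {p η : ℝ} (hp : p ∈ Set.Ico 0 1)
    (hη : η < 1) :
    ∃ δ > 0, δ ≤ 1 ∧ ∃ r < 1, ∀ t : G → ℝ, (∀ s ∈ Γ, t s ∈ Set.Icc 0 η) → ∑ s ∈ Γ, t s = 1 →
      ‖convolution Γ fun s => stepProb p Γ.card (t s) + δ‖ ≤ r := by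
  have hΓ' : (1 : ℝ) < Γ.card := Nat.one_lt_cast.2 hΓ
  set κ := (1 - p) * (1 - η) / (Γ.card - 1) * (Γ.card - ‖convolution Γ 1‖)
  have hκ : 0 < κ := mul_pos (div_pos (mul_pos (sub_pos.2 hp.2) (sub_pos.2 hη))
    (sub_pos.2 hΓ')) (sub_pos.2 hgap)
  obtain ⟨δ, hδ, hδlt⟩ := exists_between (lt_min one_pos (div_pos hκ (one_pos.trans hΓ')))
  obtain ⟨hδ1, hδκ⟩ := lt_min_iff.1 hδlt
  rw [lt_div_iff₀ (one_pos.trans hΓ')] at hδκ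
  exact ⟨δ, hδ, hδ1.le, 1 + δ * Γ.card - κ, by linarith, fun t ht hsum =>
    norm_convolution_stepProb_add_le hΓ ⟨hp.1, hp.2.le⟩ hη.le hδ.le ht hsum⟩

namespace IsERW

variable {Ω : Type*} [MeasurableSpace Ω] {G : Type*} [Group G] [MeasurableSpace G]
  [MeasurableSingletonClass G] {P : Measure Ω} [IsProbabilityMeasure P] {p : ℝ} {Γ : Finset G}
  {X : ℕ → Ω → G} {m j : ℕ}

lemma measureReal_inter_pos_add_le (hX : IsERW P p Γ X) (hm : 1 ≤ m) {A : Set Ω}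
    (hA : MeasurableSet[pastSigma X m] A) {μ : G → ℝ} (hμ : ∀ s ∈ Γ, 0 ≤ μ s)
    (hstep : ∀ i < j, ∀ s ∈ Γ, ∀ ω ∈ A, stepProb p Γ.card (frequency X (m + i) s ω) ≤ μ s)
    {f : ℓ²(G, ℝ)} (hf : ∀ x, P.real (A ∩ {ω | pos X m ω = x}) ≤ f x) (x : G) :
    P.real (A ∩ {ω | pos X (m + j) ω = x}) ≤ (convolution Γ μ ^ j) f x := by
  induction j generalizing x with
  | zero => exact hf x
  | succ j ih =>
    have hcover : A ∩ {ω | pos X (m + (j + 1)) ω = x} ⊆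
        ⋃ s ∈ Γ, {ω | X (m + j + 1) ω = s} ∩ (A ∩ {ω | pos X (m + j) ω = x * s⁻¹}) := by
      rintro ω ⟨hωA, hω⟩
      rw [Set.mem_ofPred_eq, ← add_assoc, pos_succ] at hω
      exact Set.mem_biUnion (hX.mem_steps (m + j + 1) (Nat.le_add_left _ _) ω)
        ⟨rfl, hωA, eq_mul_inv_of_mul_eq hω⟩
    have hmeas : ∀ z, MeasurableSet[pastSigma X (m + j)] (A ∩ {ω | pos X (m + j) ω = z}) :=
      fun z => (pastSigma_mono X (Nat.le_add_right m j) _ hA).inter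
        (measurable_pastSigma_of_factorsThrough hX.mem_steps (factorsThrough_pos X (m + j))
          (measurableSet_singleton z))
    calc P.real (A ∩ {ω | pos X (m + (j + 1)) ω = x})
        ≤ ∑ s ∈ Γ, P.real
            ({ω | X (m + j + 1) ω = s} ∩ (A ∩ {ω | pos X (m + j) ω = x * s⁻¹})) :=
          (measureReal_mono hcover (measure_ne_top _ _)).trans (measureReal_biUnion_finset_le _ _)
      _ ≤ ∑ s ∈ Γ, μ s * (convolution Γ μ ^ j) f (x * s⁻¹) := by
          refine Finset.sum_le_sum fun s hs => ?_
          refine (hX.measureReal_step_inter_le (by lia) hs (hmeas _) (hμ s hs) fun ω hω =>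
            hstep j (Nat.lt_succ_self j) s hs ω hω.1).trans ?_
          exact mul_le_mul_of_nonneg_left
            (ih (fun i hi => hstep i (hi.trans (Nat.lt_succ_self j))) _) (hμ s hs)
      _ = (convolution Γ μ ^ (j + 1)) f x := by
          rw [pow_succ', mul_apply_eq_comp, convolution_apply]

lemma measureReal_inter_pos_add_le_norm (hX : IsERW P p Γ X) (hm : 1 ≤ m) {A : Set Ω}
    (hA : MeasurableSet[pastSigma X m] A) {y : G} (hy : ∀ ω ∈ A, pos X m ω = y) {μ : G → ℝ}
    (hμ : ∀ s ∈ Γ, 0 ≤ μ s)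
    (hstep : ∀ i < j, ∀ s ∈ Γ, ∀ ω ∈ A, stepProb p Γ.card (frequency X (m + i) s ω) ≤ μ s)
    (x : G) :
    P.real (A ∩ {ω | pos X (m + j) ω = x}) ≤ P.real A * ‖convolution Γ μ‖ ^ j := by
  classical
  let f : ℓ²(G, ℝ) := P.real A • lp.single 2 y 1
  have hf : ∀ z, P.real (A ∩ {ω | pos X m ω = z}) ≤ f z := by
    intro z
    rcases eq_or_ne z y with rfl | hz
    · simpa [f] using measureReal_mono (μ := P) Set.inter_subset_left
    · rw [Set.eq_empty_of_forall_notMem fun ω (hω : ω ∈ A ∩ {ω | pos X m ω = z}) =>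
        hz (hω.2.symm.trans (hy ω hω.1))]
      simp [f, hz]
  have hnorm : ‖f‖ = P.real A := by simp [f, norm_smul, lp.norm_single]
  have : Nontrivial ℓ²(G, ℝ) :=
    nontrivial_of_ne (lp.single 2 y 1) 0 (norm_ne_zero_iff.1 (by simp [lp.norm_single]))
  calc P.real (A ∩ {ω | pos X (m + j) ω = x}) ≤ (convolution Γ μ ^ j) f x :=
        hX.measureReal_inter_pos_add_le hm hA hμ hstep hf x
    _ ≤ ‖(convolution Γ μ ^ j) f‖ :=
        (Real.le_norm_self _).trans (lp.norm_apply_le_norm two_ne_zero _ x)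
    _ ≤ ‖convolution Γ μ‖ ^ j * ‖f‖ :=
        ContinuousLinearMap.le_of_opNorm_le _ (norm_pow_le _ j) f
    _ = _ := by rw [hnorm, mul_comm]

variable {η δ r : ℝ}

lemma measureReal_history_inter_pos_add_le (hX : IsERW P p Γ X) (hp : p ∈ Set.Icc 0 1)
    (hΓ : 2 ≤ Γ.card) (hm : 1 ≤ m) (hδ : 0 ≤ δ) (hj : j ≤ δ * m)
    (hr : ∀ t : G → ℝ, (∀ s ∈ Γ, t s ∈ Set.Icc 0 η) → ∑ s ∈ Γ, t s = 1 →
      ‖convolution Γ fun s => stepProb p Γ.card (t s) + δ‖ ≤ r)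
    {ω : Ω} (hω : ∀ s ∈ Γ, frequency X m s ω ≤ η) (x : G) :
    P.real (history X m ⁻¹' {history X m ω} ∩ {ω | pos X (m + j) ω = x})
      ≤ P.real (history X m ⁻¹' {history X m ω}) * r ^ j := by
  have hΓ' : (2 : ℝ) ≤ Γ.card := Nat.ofNat_le_cast.2 hΓ
  have hμ : ∀ s ∈ Γ, 0 ≤ stepProb p Γ.card (frequency X m s ω) + δ := fun s _ => by
    have := le_stepProb (t := frequency X m s ω) hp (one_lt_two.trans_le hΓ')
      frequency_mem_Icc.1 frequency_mem_Icc.2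
    rw [sub_self, mul_zero, zero_div] at this
    positivity
  have hstep : ∀ i < j, ∀ s ∈ Γ, ∀ ω' ∈ history X m ⁻¹' {history X m ω},
      stepProb p Γ.card (frequency X (m + i) s ω')
        ≤ stepProb p Γ.card (frequency X m s ω) + δ := by
    intro i hi s _ ω' hω'
    have hfreq : frequency X m s ω' = frequency X m s ω :=
      congrArg (fun N : ℕ => (N / m : ℝ)) (factorsThrough_pastCount X m s hω')
    have hdrift : (i / m : ℝ) ≤ δ :=
      (div_le_iff₀ (by positivity)).2 ((Nat.cast_le.2 hi.le).trans hj)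
    rw [← hfreq]
    exact (stepProb_le_add_abs hp hΓ' _ _).trans
      (add_le_add le_rfl ((abs_frequency_add_sub_le hm i).trans hdrift))
  refine (hX.measureReal_inter_pos_add_le_norm hm (measurableSet_history_fiber m _)
    (fun ω' hω' => factorsThrough_pos X m hω') hμ hstep x).trans ?_
  gcongr
  exact hr _ (fun s hs => ⟨frequency_mem_Icc.1, hω s hs⟩)
    (sum_frequency (fun i hi => hX.mem_steps i hi ω) hm)

lemma measureReal_pos_add_le (hX : IsERW P p Γ X) (hp : p ∈ Set.Icc 0 1) (hΓ : 3 ≤ Γ.card)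
    (hm : 1 ≤ m) (hδ : 0 ≤ δ) (hj : j ≤ δ * m) (hr0 : 0 ≤ r)
    (hr : ∀ t : G → ℝ, (∀ s ∈ Γ, t s ∈ Set.Icc 0 η) → ∑ s ∈ Γ, t s = 1 →
      ‖convolution Γ fun s => stepProb p Γ.card (t s) + δ‖ ≤ r) (x : G) :
    P.real {ω | pos X (m + j) ω = x} ≤ Γ.card * ((1 + max p (1 / 2)) / 2 ^ η) ^ m + r ^ j := by
  have hbad : P.real (⋃ s ∈ Γ, {ω | η ≤ frequency X m s ω})
      ≤ Γ.card * ((1 + max p (1 / 2)) / 2 ^ η) ^ m := by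
    refine (measureReal_biUnion_finset_le _ _).trans ?_
    refine (Finset.sum_le_card_nsmul _ _ _ fun s hs =>
      hX.measureReal_le_frequency_le hp hΓ hs η hm).trans_eq (nsmul_eq_mul _ _)
  refine (measureReal_le_add_of_fiber
    (fun ω => history_mem_piFinset (fun i hi => hX.mem_steps i hi ω) m)
    (fun w => pastSigma_le hX.meas m _ (measurableSet_history_fiber m w)) _
    (pow_nonneg hr0 j) fun ω hω => ?_).trans (add_le_add hbad le_rfl)
  simp only [Set.mem_iUnion, Set.mem_ofPred_eq, exists_prop, not_exists, not_and, not_le] at hω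
  exact hX.measureReal_history_inter_pos_add_le hp (by lia) hm hδ hj hr (fun s hs => (hω s hs).le) x

lemma measureReal_pos_le_mul_rpow (hX : IsERW P p Γ X) (hp : p ∈ Set.Icc 0 1) (hΓ : 3 ≤ Γ.card)
    (hδ : 0 ≤ δ) (hδ1 : δ ≤ 1) (hr1 : r ≤ 1) (hη : (1 + max p (1 / 2)) / 2 ^ η ≤ r)
    (hr : ∀ t : G → ℝ, (∀ s ∈ Γ, t s ∈ Set.Icc 0 η) → ∑ s ∈ Γ, t s = 1 →
      ‖convolution Γ fun s => stepProb p Γ.card (t s) + δ‖ ≤ r) {n : ℕ} (hn : 1 ≤ n) (x : G) :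
    P.real {ω | pos X n ω = x} ≤ (Γ.card + 1) * r⁻¹ * (r ^ (δ / 2)) ^ n := by
  have hb : 0 < (1 + max p (1 / 2)) / 2 ^ η := by
    have := hp.1
    positivity
  have hr0 : 0 < r := hb.trans_le hη
  obtain ⟨j, hj_le, hj_ge⟩ : ∃ j : ℕ, (j : ℝ) ≤ δ / 2 * n ∧ δ / 2 * n - 1 ≤ j :=
    ⟨⌊δ / 2 * n⌋₊, Nat.floor_le (by positivity), (Nat.sub_one_lt_floor _).le⟩
  obtain ⟨m, rfl⟩ : ∃ m, n = m + j := Nat.exists_eq_add_of_le' <| Nat.cast_le.1 <|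
    hj_le.trans (mul_le_of_le_one_left (Nat.cast_nonneg n) (by linarith))
  have hn0 : (1 : ℝ) ≤ (m + j : ℕ) := Nat.one_le_cast.2 hn
  have hnm : ((m + j : ℕ) : ℝ) ≤ 2 * m := by
    push_cast at hj_le hn0 ⊢
    nlinarith
  have hm1 : 1 ≤ m := Nat.one_le_iff_ne_zero.2 (by rintro rfl; norm_num at hnm; linarith)
  have hjδ : (j : ℝ) ≤ δ * m := hj_le.trans (by nlinarith)
  have hjm : j ≤ m := Nat.cast_le.1 (hjδ.trans (mul_le_of_le_one_left (Nat.cast_nonneg m) hδ1))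
  calc P.real {ω | pos X (m + j) ω = x}
      ≤ Γ.card * ((1 + max p (1 / 2)) / 2 ^ η) ^ m + r ^ j :=
        hX.measureReal_pos_add_le hp hΓ hm1 hδ hjδ hr0.le hr x
    _ ≤ Γ.card * r ^ j + r ^ j := by
        gcongr
        exact (pow_le_pow_left₀ hb.le hη m).trans (pow_le_pow_of_le_one hr0.le hr1 hjm)
    _ = (Γ.card + 1) * r ^ (j : ℝ) := by rw [Real.rpow_natCast]; ring
    _ ≤ (Γ.card + 1) * r ^ (δ / 2 * (m + j : ℕ) - 1) := by
        gcongr ?_ * ?_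
        exact Real.rpow_le_rpow_of_exponent_ge hr0 hr1 hj_ge
    _ = (Γ.card + 1) * r⁻¹ * (r ^ (δ / 2)) ^ (m + j) := by
        rw [Real.rpow_sub_one hr0.ne', Real.rpow_mul_natCast hr0.le]
        ring

end IsERW

lemma exists_forall_min_le_pow {q θ : ℝ} (hq : q < 1) (hθ : θ ∈ Set.Ico 0 1) (C : ℝ) :
    ∃ ρ ∈ Set.Ioo (0 : ℝ) 1, ∀ n : ℕ, min q (C * θ ^ n) ≤ ρ ^ n := by
  obtain ⟨σ, hθσ, hσ1⟩ := exists_between hθ.2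
  have hσ0 : 0 < σ := hθ.1.trans_lt hθσ
  have hlim : Tendsto (fun n : ℕ => C * (θ / σ) ^ n) atTop (nhds 0) := by
    simpa using (tendsto_pow_atTop_nhds_zero_of_lt_one (div_nonneg hθ.1 hσ0.le)
      ((div_lt_one hσ0).2 hθσ)).const_mul C
  obtain ⟨N, hN⟩ := eventually_atTop.1 (hlim.eventually_le_const one_pos)
  have hsmall : ∀ᶠ ρ : ℝ in nhdsWithin 1 (Set.Iio 1), ∀ n ∈ Finset.range N, q ≤ ρ ^ n := by
    refine (Finset.eventually_all _).2 fun n _ => ?_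
    have hpow : Tendsto (fun ρ : ℝ => ρ ^ n) (nhdsWithin 1 (Set.Iio 1)) (nhds 1) := by
      simpa using ((continuous_pow n).tendsto (1 : ℝ)).mono_left nhdsWithin_le_nhds
    exact hpow.eventually_const_le hq
  obtain ⟨ρ, hρ, hσρ, hρ1⟩ := (hsmall.and (Ioo_mem_nhdsLT hσ1)).exists
  refine ⟨ρ, ⟨hσ0.trans hσρ, hρ1⟩, fun n => ?_⟩
  rcases lt_or_ge n N with hn | hn
  · exact (min_le_left _ _).trans (hρ n (Finset.mem_range.2 hn))
  · have := hN n hn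
    rw [div_pow, mul_div_assoc', div_le_one (by positivity)] at this
    exact (min_le_right _ _).trans (this.trans (by gcongr))

end SRRW

theorem erw_regular_tree_exponential_decay_general {G : Type*} [Group G] [MeasurableSpace G]
    [MeasurableSingletonClass G] {Γ : Finset G} (hΓ : 3 ≤ Γ.card)
    (hgap : ‖convolution Γ 1‖ < Γ.card) {p : ℝ} (hp : p ∈ Set.Ico 0 1) :
    ∃ ρ ∈ Set.Ioo (0 : ℝ) 1, ∀ {Ω : Type*} [MeasurableSpace Ω] (P : Measure Ω)
      [IsProbabilityMeasure P] (X : ℕ → Ω → G), IsERW P p Γ X → ∀ n : ℕ, 1 ≤ n → ∀ x : G,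
        P {ω | pos X n ω = x} ≤ ENNReal.ofReal (ρ ^ n) := by
  have hp' : p ∈ Set.Icc 0 1 := Set.Ico_subset_Icc_self hp
  have hq : max p (1 / 2) < 1 := max_lt hp.2 one_half_lt_one
  have hq0 : 0 < 1 + max p (1 / 2) := by have := hp.1; positivity
  -- Any `η` with `1 + max p (1 / 2) < 2 ^ η` makes the Chernoff bound on the frequencies decay.
  have hlog : Real.logb 2 (1 + max p (1 / 2)) < 1 :=
    (Real.logb_lt_iff_lt_rpow one_lt_two hq0).2 (by linarith [Real.rpow_one 2])
  obtain ⟨η, hqη, hη⟩ := exists_between hlog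
  rw [Real.logb_lt_iff_lt_rpow one_lt_two hq0] at hqη
  obtain ⟨δ, hδ, hδ1, r, hr1, hr⟩ :=
    exists_norm_convolution_stepProb_add_le (by lia) hgap hp hη
  set R := max ((1 + max p (1 / 2)) / 2 ^ η) r
  have hR0 : 0 < R := lt_max_of_lt_left (by positivity)
  have hR1 : R < 1 := max_lt ((div_lt_one (by positivity)).2 hqη) hr1
  obtain ⟨ρ, hρ, hle⟩ := exists_forall_min_le_pow hq
    ⟨by positivity, Real.rpow_lt_one hR0.le hR1 (half_pos hδ)⟩ ((Γ.card + 1) * R⁻¹)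
  refine ⟨ρ, hρ, fun P _ X hX n hn x => ?_⟩
  rw [← ofReal_measureReal]
  refine ENNReal.ofReal_le_ofReal (le_trans ?_ (hle n))
  refine le_min (hX.measureReal_pos_le_max hp' hΓ hn x) ?_
  exact hX.measureReal_pos_le_mul_rpow hp' hΓ hδ.le hδ1 hR1.le (le_max_left _ _)
    (fun t ht hsum => (hr t ht hsum).trans (le_max_right _ _)) hn x

/-- **Exponential decay for the elephant random walk on a regular tree.**
Suppose `G` is generated by a finite symmetric set `Γ` whose Cayley graph is the
infinite `d`-regular tree `𝕋_d` with `d ≥ 3`.  Let `S` be an elephant random walk on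
`G_Γ` with memory parameter `p ∈ [0,1)`.  Then there is `ρ = ρ(G, p, d) ∈ (0,1)` such
that `sup_x ℙ(S_n = x) ≤ ρⁿ` for all `n ≥ 1`. -/
theorem erw_regular_tree_exponential_decay
    {G : Type*} [Group G] [MeasurableSpace G] [MeasurableSingletonClass G]
    {Ω : Type*} [MeasurableSpace Ω] (P : Measure Ω) [IsProbabilityMeasure P]
    (Γ : Finset G) (hsymm : ∀ s ∈ Γ, s⁻¹ ∈ Γ)
    (hgen : Subgroup.closure (Γ : Set G) = ⊤)
    (d : ℕ) (hd : 3 ≤ d)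
    (htree : (cayleyGraph Γ).IsTree)
    (hreg : ∀ x : G, ((cayleyGraph Γ).neighborSet x).ncard = d)
    (p : ℝ) (hp0 : 0 ≤ p) (hp1 : p < 1)
    (X : ℕ → Ω → G) (hX : IsERW P p Γ X) :
    ∃ ρ : ℝ, ρ ∈ Set.Ioo (0 : ℝ) 1 ∧ ∀ n : ℕ, 1 ≤ n → ∀ x : G,
      P {ω | pos X n ω = x} ≤ ENNReal.ofReal (ρ ^ n) := by
  classical
  have hcard : 3 ≤ (Γ.erase 1).card := by
    rw [← ncard_neighborSet_cayleyGraph hsymm 1, hreg 1]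
    exact hd
  obtain ⟨ρ, hρ, hdecay⟩ := erw_regular_tree_exponential_decay_general
    (hcard.trans Γ.card_erase_le) (norm_convolution_one_lt_card_of_isTree htree hcard) ⟨hp0, hp1⟩
  exact ⟨ρ, hρ, hdecay P X hX⟩
end

section
/- The elephant random walk with memory parameter p ∈ [0,1] on the Cayley graph G_Γ of a finitely generated group G with respect to a finite symmetric generating set Γ = {g₁,…,g_d} (d ≥ 2) is a generalized step-reinforced random walk: when p ≥ 1/d it is the usual SRRW with reinforcement parameter α = (dp−1)/(d−1) and step distribution μ uniform on Γ; when p < 1/d it is a generalized SRRW with reinforcement parameter α = 1−dp, step distribution μ uniform on Γ, and transformations T_n(g_i) = g_{σ^{Y_n}(i)}, where σ is the cyclic rotation (1 2 3 … d) and (Y_n)_{n≥2} are i.i.d. uniform on {1,…,d−1} (so T_n(g_i) is uniform on Γ \ {g_i}). -/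
open MeasureTheory ProbabilityTheory Filter
open scoped ENNReal NNReal

namespace SRRW

variable {Ω : Type*} [MeasurableSpace Ω] {G : Type*} [Group G] [MeasurableSpace G]

/-- The family combining `(ξ_n)`, `(u_n)` and `(g_n)`, with values in the common
measurable space `Bool ⊕ ℕ ⊕ G`. -/
def fam (ξ : ℕ → Ω → Bool) (u : ℕ → Ω → ℕ) (g : ℕ → Ω → G) :
    (ℕ ⊕ ℕ ⊕ ℕ) → Ω → (Bool ⊕ ℕ ⊕ G)
  | .inl n => fun ω => .inl (ξ n ω)
  | .inr (.inl n) => fun ω => .inr (.inl (u n ω))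
  | .inr (.inr n) => fun ω => .inr (.inr (g n ω))

/-- The driving randomness of a (generalized) step-reinforced random walk:
`(ξ_n)_{n ≥ 2}` are i.i.d. Bernoulli(α), `(u_n)_{n ≥ 2}` are independent with `u_n`
uniform on `{1, …, n-1}`, `(g_n)_{n ≥ 1}` are i.i.d. with law `μ` (the fresh steps),
and all of them are jointly independent. -/
structure IsDriving (P : Measure Ω) (α : ℝ) (μ : Measure G)
    (ξ : ℕ → Ω → Bool) (u : ℕ → Ω → ℕ) (g : ℕ → Ω → G) : Prop where
  meas_ξ : ∀ n, Measurable (ξ n)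
  meas_u : ∀ n, Measurable (u n)
  meas_g : ∀ n, Measurable (g n)
  ξ_law : ∀ n, 2 ≤ n → P {ω | ξ n ω = true} = ENNReal.ofReal α
  u_range : ∀ n, 2 ≤ n → ∀ ω, 1 ≤ u n ω ∧ u n ω < n
  u_law : ∀ n, 2 ≤ n → ∀ k, 1 ≤ k → k < n → P {ω | u n ω = k} = ((n - 1 : ℕ) : ℝ≥0∞)⁻¹
  g_law : ∀ n, 1 ≤ n → P.map (g n) = μ
  indep : iIndepFun (fam ξ u g) P

/-- `X` is the step sequence of a generalized step-reinforced random walk with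
reinforcement parameter `α`, step distribution `μ` and transformations `(T_n)_{n ≥ 2}`:
`X_1 = g_1` and, for `n ≥ 2`, `X_n = T_n(X_{u_n})` if `ξ_n = 1` while `X_n = g_n`
(a fresh `μ`-distributed step) if `ξ_n = 0`.  Each `T_n` is a (random) measurable
transformation of `G` which is independent of `(ξ_k)_{k ≥ n}`, `(u_k)_{k ≥ n}` and of the
fresh steps `(g_k)_{k ≥ n}`. -/
def IsGenSRRW (P : Measure Ω) (α : ℝ) (μ : Measure G)
    (T : ℕ → Ω → G → G) (X : ℕ → Ω → G) : Prop :=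
  ∃ ξ u g, IsDriving P α μ ξ u g ∧
    (∀ n, Measurable (Function.uncurry (T n))) ∧
    (∀ n, 2 ≤ n → IndepFun
      (fun ω (k : {k : ℕ // n ≤ k}) => (ξ k ω, u k ω, g k ω))
      (fun ω => T n ω) P) ∧
    (∀ ω, X 1 ω = g 1 ω) ∧
    (∀ n, 2 ≤ n → ∀ ω, X n ω = if ξ n ω then T n ω (X (u n ω) ω) else g n ω)


/-- `X` is the step sequence of a usual step-reinforced random walk (all transformations
are the identity). -/
def IsSRRW (P : Measure Ω) (α : ℝ) (μ : Measure G) (X : ℕ → Ω → G) : Prop :=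
  IsGenSRRW P α μ (fun _ _ => id) X

end SRRW

open SRRW

/-! Conditionally on the past, the law of each step of the elephant random walk is the average over
the past steps `r` of the kernel `p • δ_r + (1 - p) • unif (Γ \ {r})`. This kernel is affine in `p`,
equals `δ_r` at `p = 1` and `unif (Γ \ {r})` at `p = 0`, and equals `μ = unif Γ` at `p = 1 / d`; so
for `p = α a + (1 - α) / d` with `a ∈ {0, 1}` it is a mixture, with weights `α` and `1 - α`, of the
law of a transformed past step and of the law `μ` of a fresh step. A generalized step-reinforced
random walk driven by independent uniform variables has the same conditional laws, hence the same
law by the chain rule. Both walks also carry a meaningless variable `X 0`; the one of the elephant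
random walk is reproduced by sampling from its conditional law given all the later steps. -/

namespace SRRW

open scoped unitInterval

section PathSpace

theorem measurableSet_piNat_cylinder {E : ℕ → Type*} [∀ n, MeasurableSpace (E n)]
    [∀ n, MeasurableSingletonClass (E n)] (x : ∀ n, E n) (n : ℕ) :
    MeasurableSet (PiNat.cylinder x n) := by
  rw [PiNat.cylinder_eq_pi]
  exact MeasurableSet.pi (Finset.countable_toSet _) fun _ _ => measurableSet_singleton _

theorem ext_of_piNat_cylinder {E : ℕ → Type*} [∀ n, MeasurableSpace (E n)]
    [∀ n, MeasurableSingletonClass (E n)] [∀ n, Countable (E n)] [∀ n, Nonempty (E n)]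
    {m m' : Measure (∀ n, E n)} [IsFiniteMeasure m]
    (h : ∀ x n, m (PiNat.cylinder x n) = m' (PiNat.cylinder x n)) : m = m' := by
  have range_marginal (n : ℕ) :
      m.map (Finset.range n).restrict = m'.map (Finset.range n).restrict := by
    refine Measure.ext_of_singleton fun a => ?_
    obtain ⟨x, rfl⟩ : ∃ x, (Finset.range n).restrict x = a :=
      Subtype.surjective_restrict (fun i => i ∈ Finset.range n) a
    have preimage_eq :
        (Finset.range n).restrict ⁻¹' {(Finset.range n).restrict x} = PiNat.cylinder x n := by
      ext y
      simp [funext_iff]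
    rw [Measure.map_apply (by fun_prop) (measurableSet_singleton _),
      Measure.map_apply (by fun_prop) (measurableSet_singleton _), preimage_eq, h]
  refine IsProjectiveLimit.unique (P := fun J => m.map J.restrict) (fun _ => rfl) fun J => ?_
  obtain ⟨n, hJ⟩ := J.exists_nat_subset_range
  have map_restrict (l : Measure (∀ n, E n)) :
      l.map J.restrict = (l.map (Finset.range n).restrict).map (Finset.restrict₂ hJ) := by
    rw [Measure.map_map (by fun_prop) (by fun_prop), Finset.restrict₂_comp_restrict]
  change m'.map J.restrict = m.map J.restrict
  rw [map_restrict, map_restrict, range_marginal]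

end PathSpace

section ReinforcedLaw

variable {G : Type*} [MeasurableSpace G]

/-- The law of step `n + 1` of a reinforced sequence whose first `n` steps are
`x 0, …, x (n - 1)`: the first step has law `μ`, and every later one has law `q r`, where `r` is
recalled uniformly from the past steps. -/
noncomputable def nextStepLaw (μ : Measure G) (q : G → Measure G) (x : ℕ → G) : ℕ → Measure G
  | 0 => μ
  | n + 1 => ((n + 1 : ℕ) : ℝ≥0∞)⁻¹ • ∑ k ∈ Finset.range (n + 1), q (x k)

/-- The measure `m` on paths is the law of a sequence of steps each of which, given the past, is
distributed according to `nextStepLaw μ q`. On a countable step space this is the chain rule for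
the probabilities of initial segments. -/
def IsReinforcedLaw (μ : Measure G) (q : G → Measure G) (m : Measure (ℕ → G)) : Prop :=
  ∀ x n, m (PiNat.cylinder x n) = ∏ j ∈ Finset.range n, nextStepLaw μ q x j {x j}

theorem IsReinforcedLaw.unique [Countable G] [MeasurableSingletonClass G] [Nonempty G]
    {μ : Measure G} {q : G → Measure G} {m m' : Measure (ℕ → G)} [IsFiniteMeasure m]
    (hm : IsReinforcedLaw μ q m) (hm' : IsReinforcedLaw μ q m') : m = m' :=
  ext_of_piNat_cylinder fun x n => (hm x n).trans (hm' x n).symm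

end ReinforcedLaw

section ElephantKernel

variable {G : Type*} [MeasurableSpace G]

/-- The law of a step of the elephant random walk on `Γ` with memory parameter `p`, given that the
step recalled from the past is `r`. -/
noncomputable def elephantKernel (p : ℝ) (Γ : Finset G) (r : G) : Measure G :=
  ENNReal.ofReal p • Measure.dirac r
    + ENNReal.ofReal (1 - p) • uniformOn ((Γ : Set G) \ {r})

theorem elephantKernel_one (Γ : Finset G) (r : G) : elephantKernel 1 Γ r = Measure.dirac r := by
  simp [elephantKernel]

theorem elephantKernel_zero (Γ : Finset G) (r : G) :
    elephantKernel 0 Γ r = uniformOn ((Γ : Set G) \ {r}) := by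
  simp [elephantKernel]

theorem elephantKernel_convex_combination {α a b : ℝ} (hα : α ∈ I) (ha : a ∈ I) (hb : b ∈ I)
    (Γ : Finset G) (r : G) :
    ENNReal.ofReal α • elephantKernel a Γ r + ENNReal.ofReal (1 - α) • elephantKernel b Γ r
      = elephantKernel (α * a + (1 - α) * b) Γ r := by
  have mix {a b : ℝ} (ha : 0 ≤ a) (hb : 0 ≤ b) :
      ENNReal.ofReal (α * a + (1 - α) * b)
        = ENNReal.ofReal α * ENNReal.ofReal a + ENNReal.ofReal (1 - α) * ENNReal.ofReal b := by
    rw [← ENNReal.ofReal_mul hα.1, ← ENNReal.ofReal_mul (sub_nonneg.2 hα.2),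
      ← ENNReal.ofReal_add (mul_nonneg hα.1 ha) (mul_nonneg (sub_nonneg.2 hα.2) hb)]
  have complement : 1 - (α * a + (1 - α) * b) = α * (1 - a) + (1 - α) * (1 - b) := by ring
  simp only [elephantKernel, complement, mix ha.1 hb.1,
    mix (sub_nonneg.2 ha.2) (sub_nonneg.2 hb.2), add_smul, smul_add, mul_smul]
  exact add_add_add_comm _ _ _ _

variable [MeasurableSingletonClass G]

theorem uniformOn_finset_singleton [DecidableEq G] (Γ : Finset G) (s : G) :
    uniformOn (Γ : Set G) {s} = if s ∈ Γ then (Γ.card : ℝ≥0∞)⁻¹ else 0 := by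
  rw [← Finset.coe_singleton, uniformOn_apply_finset]
  split_ifs with hs <;> simp [hs]

theorem elephantKernel_inv_card {Γ : Finset G} {r : G} (hr : r ∈ Γ) :
    elephantKernel (Γ.card : ℝ)⁻¹ Γ r = uniformOn (Γ : Set G) := by
  classical
  have prob : IsProbabilityMeasure (uniformOn (Γ : Set G)) :=
    isProbabilityMeasure_uniformOn Γ.finite_toSet ⟨r, hr⟩
  have card_pos : (0 : ℝ) < Γ.card := by exact_mod_cast Finset.card_pos.2 ⟨r, hr⟩
  have mass_recalled : uniformOn (Γ : Set G) {r} = ENNReal.ofReal (Γ.card : ℝ)⁻¹ := by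
    rw [uniformOn_finset_singleton, if_pos hr, ENNReal.ofReal_inv_of_pos card_pos,
      ENNReal.ofReal_natCast]
  have mass_others : uniformOn (Γ : Set G) (Γ \ {r}) = ENNReal.ofReal (1 - (Γ.card : ℝ)⁻¹) := by
    rw [Set.sdiff_eq, uniformOn_inter_self Γ.finite_toSet,
      prob_compl_eq_one_sub (measurableSet_singleton r), mass_recalled,
      ENNReal.ofReal_sub _ (inv_nonneg.2 card_pos.le), ENNReal.ofReal_one]
  ext A hA
  have total := uniformOn_disjoint_union (u := A) (Set.finite_singleton r)
    (Γ.finite_toSet.sdiff (t := {r})) Set.disjoint_sdiff_right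
  rw [Set.union_sdiff_cancel (Set.singleton_subset_iff.2 hr), mass_recalled, mass_others,
    uniformOn_singleton, mul_comm, mul_comm (uniformOn _ A)] at total
  rw [← total]
  simp [elephantKernel, hA, Set.indicator_apply]

theorem elephantKernel_singleton [DecidableEq G] {p : ℝ} {Γ : Finset G} {r s : G}
    (hr : r ∈ Γ) (hs : s ∈ Γ) :
    elephantKernel p Γ r {s}
      = ENNReal.ofReal (if r = s then p else (1 - p) / (Γ.card - 1)) := by
  rw [elephantKernel, ← Finset.coe_erase, Measure.add_apply, Measure.smul_apply,
    Measure.smul_apply, uniformOn_finset_singleton, Measure.dirac_apply]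
  rcases eq_or_ne r s with rfl | hrs
  · simp
  have card_erase : ((Γ.erase r).card : ℝ) = Γ.card - 1 := by
    rw [← Finset.card_erase_add_one hr]
    push_cast
    ring
  have card_pos : (0 : ℝ) < (Γ.erase r).card := by
    exact_mod_cast Finset.card_pos.2 ⟨s, Finset.mem_erase.2 ⟨hrs.symm, hs⟩⟩
  rw [if_neg hrs, ← card_erase, ENNReal.ofReal_div_of_pos card_pos, ENNReal.ofReal_natCast]
  simp [hrs, hs, hrs.symm, div_eq_mul_inv]

theorem elephantKernel_singleton_of_notMem {p : ℝ} {Γ : Finset G} {r s : G}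
    (hr : r ∈ Γ) (hs : s ∉ Γ) : elephantKernel p Γ r {s} = 0 := by
  classical
  rw [elephantKernel, ← Finset.coe_erase, Measure.add_apply, Measure.smul_apply,
    Measure.smul_apply, uniformOn_finset_singleton, Measure.dirac_apply]
  simp [hs, ne_of_mem_of_not_mem hr hs]

end ElephantKernel

section ElephantRandomWalk

variable {Ω G : Type*} {X : ℕ → Ω → G} {p : ℝ} {Γ : Finset G}

theorem pastCount_of_mem_cylinder [DecidableEq G] {x : ℕ → G} {n : ℕ} {ω : Ω}
    (hω : (fun k => X (k + 1) ω) ∈ PiNat.cylinder x n) (s : G) :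
    pastCount X n s ω = ((Finset.range n).filter fun k => x k = s).card := by
  have past_eq : {j : ℕ | 1 ≤ j ∧ j ≤ n ∧ X j ω = s}
      = (· + 1) '' ((Finset.range n).filter fun k => x k = s : Finset ℕ) := by
    ext j
    simp only [Set.mem_ofPred_eq, Set.mem_image, Finset.coe_filter, Finset.mem_range]
    constructor
    · rintro ⟨hj1, hjn, hjs⟩
      obtain ⟨k, rfl⟩ := Nat.exists_eq_add_of_le' hj1
      exact ⟨k, ⟨hjn, (hω k hjn).symm.trans hjs⟩, rfl⟩
    · rintro ⟨k, ⟨hkn, hks⟩, rfl⟩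
      exact ⟨k.succ_pos, hkn, (hω k hkn).trans hks⟩
  rw [pastCount, past_eq, Set.ncard_image_of_injective _ (add_left_injective 1),
    Set.ncard_coe_finset]

variable [MeasurableSpace G]

theorem measurableSet_pastSigma_cylinder [MeasurableSingletonClass G] (x : ℕ → G) (n : ℕ) :
    MeasurableSet[pastSigma X n] {ω | (fun k => X (k + 1) ω) ∈ PiNat.cylinder x n} := by
  have : {ω | (fun k => X (k + 1) ω) ∈ PiNat.cylinder x n}
      = ⋂ j ∈ Finset.range n, X (j + 1) ⁻¹' {x j} := by
    ext ω
    simp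
  rw [this]
  refine Finset.measurableSet_biInter _ fun j hj => ?_
  have hle : MeasurableSpace.comap (X (j + 1)) inferInstance ≤ pastSigma X n :=
    le_iSup₂_of_le (j + 1) ⟨j.succ_pos, Finset.mem_range.1 hj⟩ le_rfl
  exact hle _ ⟨{x j}, measurableSet_singleton _, rfl⟩

theorem sum_elephantKernel_singleton [MeasurableSingletonClass G] [DecidableEq G]
    (hp : p ∈ I) {x : ℕ → G} {n : ℕ} (hx : ∀ k < n, x k ∈ Γ) {s : G} (hs : s ∈ Γ) :
    ∑ k ∈ Finset.range n, elephantKernel p Γ (x k) {s}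
      = ENNReal.ofReal (p * ((Finset.range n).filter fun k => x k = s).card
          + (1 - p) * (n - ((Finset.range n).filter fun k => x k = s).card) / (Γ.card - 1)) := by
  have card_ge : (1 : ℝ) ≤ Γ.card := by exact_mod_cast Finset.card_pos.2 ⟨s, hs⟩
  have card_ne : (((Finset.range n).filter fun k => ¬ x k = s).card : ℝ)
      = n - ((Finset.range n).filter fun k => x k = s).card := by
    rw [eq_sub_iff_add_eq', ← Nat.cast_add, Finset.card_filter_add_card_filter_not,
      Finset.card_range]
  have term_nonneg (k : ℕ) :
      0 ≤ if x k = s then p else (1 - p) / ((Γ.card : ℝ) - 1) := by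
    split_ifs
    · exact hp.1
    · exact div_nonneg (sub_nonneg.2 hp.2) (sub_nonneg.2 card_ge)
  rw [Finset.sum_congr rfl fun k hk =>
      elephantKernel_singleton (hx k (Finset.mem_range.1 hk)) hs,
    ← ENNReal.ofReal_sum_of_nonneg fun k _ => term_nonneg k, Finset.sum_ite, Finset.sum_const,
    Finset.sum_const, nsmul_eq_mul, nsmul_eq_mul, card_ne]
  ring_nf

variable [MeasurableSpace Ω] {P : Measure Ω} [MeasurableSingletonClass G]

theorem IsERW.measure_cylinder_succ (hX : IsERW P p Γ X) (hp : p ∈ I) {x : ℕ → G} {n : ℕ}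
    (hn : n ≠ 0) (hx : ∀ k ≤ n, x k ∈ Γ) :
    P {ω | (fun k => X (k + 1) ω) ∈ PiNat.cylinder x (n + 1)}
      = P {ω | (fun k => X (k + 1) ω) ∈ PiNat.cylinder x n}
        * ((n : ℝ≥0∞)⁻¹ * ∑ k ∈ Finset.range n, elephantKernel p Γ (x k) {x n}) := by
  classical
  set A := {ω | (fun k => X (k + 1) ω) ∈ PiNat.cylinder x n}
  have hA : MeasurableSet[pastSigma X n] A := measurableSet_pastSigma_cylinder x n
  have hA' : MeasurableSet A :=
    (iSup₂_le fun j _ => (hX.meas j).comap_le : pastSigma X n ≤ _) A hA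
  have cylinder_succ : {ω | (fun k => X (k + 1) ω) ∈ PiNat.cylinder x (n + 1)}
      = {ω | X (n + 1) ω = x n} ∩ A := by
    ext ω
    simp only [A, PiNat.mem_cylinder_iff, Set.mem_inter_iff, Set.mem_ofPred_eq,
      Nat.forall_lt_succ_right, and_comm]
  have n_pos : (0 : ℝ) < n := by exact_mod_cast Nat.pos_of_ne_zero hn
  have const_on_A : ∀ ω ∈ A, ENNReal.ofReal
      (p * (pastCount X n (x n) ω : ℝ) / (((n + 1 : ℕ) : ℝ) - 1)
        + (1 - p) * ((((n + 1 : ℕ) : ℝ) - 1) - (pastCount X n (x n) ω : ℝ))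
          / (((Γ.card : ℝ) - 1) * (((n + 1 : ℕ) : ℝ) - 1)))
      = (n : ℝ≥0∞)⁻¹ * ∑ k ∈ Finset.range n, elephantKernel p Γ (x k) {x n} := fun ω hω => by
    rw [pastCount_of_mem_cylinder hω, Nat.cast_add_one, add_sub_cancel_right,
      sum_elephantKernel_singleton hp (fun k hk => hx k hk.le) (hx n le_rfl),
      ← ENNReal.ofReal_natCast n, ← ENNReal.ofReal_inv_of_pos n_pos,
      ← ENNReal.ofReal_mul (inv_nonneg.2 n_pos.le), ← div_div]
    congr 1
    ring
  rw [cylinder_succ, hX.cond_law (n + 1) (by lia) (x n) (hx n le_rfl) A hA,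
    Nat.add_sub_cancel, setLIntegral_congr_fun hA' const_on_A, setLIntegral_const, mul_comm]

theorem nextStepLaw_singleton_of_notMem {q : G → Measure G}
    (hq : ∀ r ∈ Γ, q r = elephantKernel p Γ r) {x : ℕ → G} {n : ℕ} (hx : ∀ k < n, x k ∈ Γ)
    (hn : x n ∉ Γ) : nextStepLaw (uniformOn (Γ : Set G)) q x n {x n} = 0 := by
  classical
  cases n with
  | zero => simp [nextStepLaw, uniformOn_finset_singleton, hn]
  | succ n =>
    have vanish : ∑ k ∈ Finset.range (n + 1), q (x k) {x (n + 1)} = 0 :=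
      Finset.sum_eq_zero fun k hk => by
        have hk := hx k (Finset.mem_range.1 hk)
        rw [hq _ hk, elephantKernel_singleton_of_notMem hk hn]
    rw [nextStepLaw, Measure.smul_apply, Measure.finsetSum_apply, vanish, smul_zero]

theorem IsERW.isReinforcedLaw [IsProbabilityMeasure P] (hX : IsERW P p Γ X) (hp : p ∈ I)
    {q : G → Measure G} (hq : ∀ r ∈ Γ, q r = elephantKernel p Γ r) :
    IsReinforcedLaw (uniformOn (Γ : Set G)) q (P.map fun ω k => X (k + 1) ω) := by
  classical
  intro x n
  have hmeas : Measurable fun ω k => X (k + 1) ω := measurable_pi_lambda _ fun k => hX.meas _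
  rw [Measure.map_apply hmeas (measurableSet_piNat_cylinder x n)]
  have null_of_notMem {k m : ℕ} (hkm : k < m) (hk : x k ∉ Γ) :
      P {ω | (fun k => X (k + 1) ω) ∈ PiNat.cylinder x m} = 0 := by
    refine measure_mono_null (fun ω hω => hk ?_) measure_empty
    exact hω k hkm ▸ hX.mem_steps (k + 1) k.succ_pos ω
  induction n with
  | zero => simp
  | succ n ih =>
    rw [Finset.prod_range_succ, ← ih]
    by_cases hlt : ∀ k < n, x k ∈ Γ
    swap
    · obtain ⟨k, hkn, hk⟩ : ∃ k < n, x k ∉ Γ := by simpa using hlt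
      exact (null_of_notMem (hkn.trans n.lt_succ_self) hk).trans (by
        rw [Set.preimage, null_of_notMem hkn hk, zero_mul])
    by_cases hn : x n ∈ Γ
    swap
    · rw [nextStepLaw_singleton_of_notMem hq hlt hn, mul_zero]
      exact null_of_notMem n.lt_succ_self hn
    cases n with
    | zero =>
      simpa [nextStepLaw, uniformOn_finset_singleton, hn, Set.preimage] using
        hX.first_step (x 0) hn
    | succ n =>
      have all_mem : ∀ k ≤ n + 1, x k ∈ Γ := fun k hk =>
        hk.lt_or_eq.elim (hlt k) fun h => h ▸ hn
      rw [nextStepLaw, Measure.smul_apply, Measure.finsetSum_apply,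
        Finset.sum_congr rfl fun k hk => by rw [hq _ (hlt k (Finset.mem_range.1 hk))]]
      exact hX.measure_cylinder_succ hp n.succ_ne_zero all_mem

end ElephantRandomWalk

section RandomRecursion

variable {Ω G : Type*} [MeasurableSpace Ω] [MeasurableSpace G] [MeasurableSingletonClass G]
  {P : Measure Ω}

theorem measure_cylinder_of_recursion {Z : ℕ → Ω → G} {F : ℕ → Ω → (ℕ → G) → G}
    (hZ : ∀ n ω, Z n ω = F n ω fun k => Z k ω)
    (hF : ∀ n ω, DependsOn (F n ω) (Set.Iio n)) {x : ℕ → G}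
    (hindep : iIndepFun (fun n ω => F n ω x) P) (n : ℕ) :
    P {ω | (fun k => Z k ω) ∈ PiNat.cylinder x n}
      = ∏ j ∈ Finset.range n, P {ω | F j ω x = x j} := by
  have cylinder_eq : {ω | (fun k => Z k ω) ∈ PiNat.cylinder x n}
      = ⋂ j ∈ Finset.range n, (fun ω => F j ω x) ⁻¹' {x j} := by
    ext ω
    simp only [PiNat.mem_cylinder_iff, Set.mem_iInter, Finset.mem_range, Set.mem_preimage,
      Set.mem_singleton_iff, Set.mem_ofPred_eq]
    have step {j : ℕ} (past : ∀ i < j, Z i ω = x i) : Z j ω = F j ω x :=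
      (hZ j ω).trans (hF j ω past)
    refine ⟨fun h j hj => (step fun i hi => h i (hi.trans hj)).symm.trans (h j hj), fun h j => ?_⟩
    induction j using Nat.strong_induction_on with
    | _ j ih => exact fun hj => (step fun i hi => ih i hi (hi.trans hj)).trans (h j hj)
  rw [cylinder_eq, hindep.measure_inter_preimage_eq_mul _ fun _ _ => measurableSet_singleton _]
  rfl

end RandomRecursion

theorem indepFun_domRestrict_of_disjoint {Ω ι : Type*} {E : ι → Type*} [MeasurableSpace Ω]
    [∀ i, MeasurableSpace (E i)] {P : Measure Ω} {f : ∀ i, Ω → E i} (hf : iIndepFun f P)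
    (hmeas : ∀ i, Measurable (f i)) {A B : Set ι} (hAB : Disjoint A B) :
    IndepFun (fun ω (i : A) => f i ω) (fun ω (i : B) => f i ω) P := by
  rw [IndepFun_iff_Indep, MeasurableSpace.comap_process_pi fun i : A => f i,
    MeasurableSpace.comap_process_pi fun i : B => f i, iSup_subtype, iSup_subtype]
  exact indep_iSup_of_disjoint (fun i => (hmeas i).comap_le) hf hAB

theorem measure_mem_eq_sum_of_indepFun {Ω ι E : Type*} [MeasurableSpace Ω] [MeasurableSpace ι]
    [MeasurableSingletonClass ι] [MeasurableSpace E] {P : Measure Ω} {K : Ω → ι} {N : Ω → E}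
    (hKN : IndepFun K N P) (hK : Measurable K) {s : Finset ι} (hs : ∀ ω, K ω ∈ s)
    {A : ι → Set E} (hA : ∀ i, MeasurableSet (A i)) :
    P {ω | N ω ∈ A (K ω)} = ∑ i ∈ s, P {ω | K ω = i} * P {ω | N ω ∈ A i} := by
  have split := sum_measure_preimage_singleton (μ := P.restrict {ω | N ω ∈ A (K ω)}) s
    fun i _ => hK (measurableSet_singleton i)
  rw [Set.eq_univ_of_forall hs (s := K ⁻¹' s), Measure.restrict_apply_univ] at split
  rw [← split]
  refine Finset.sum_congr rfl fun i _ => ?_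
  have event_eq : K ⁻¹' {i} ∩ {ω | N ω ∈ A (K ω)} = K ⁻¹' {i} ∩ N ⁻¹' A i := by
    ext ω
    simp +contextual
  rw [Measure.restrict_apply (hK (measurableSet_singleton i)), event_eq,
    hKN.measure_inter_preimage_eq_mul _ _ (measurableSet_singleton i) (hA i)]
  rfl

section UniformSeeds

/-- The reinforcement coin, which shows heads with probability `α`, as a function of a uniform
seed. -/
noncomputable def coin (α t : I) : Bool := decide (t ≤ α)

@[fun_prop]
theorem measurable_coin (α : I) : Measurable (coin α) := by
  have heads_eq : coin α ⁻¹' {true} = Set.Iic α := by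
    ext t
    simp [coin]
  exact measurable_to_bool (heads_eq ▸ measurableSet_Iic)

theorem volume_coin_eq_true (α : I) : volume {t | coin α t = true} = ENNReal.ofReal α := by
  simp only [coin, decide_eq_true_eq]
  exact unitInterval.volume_Iic α

theorem volume_coin_eq_false (α : I) : volume {t | coin α t = false} = ENNReal.ofReal (1 - α) := by
  simp only [coin, decide_eq_false_iff_not, not_le]
  exact unitInterval.volume_Ioi α

/-- A random variable of law `μ` on the unit interval, which thus turns uniform seeds into samples
of `μ`. -/
noncomputable def sample {E : Type*} [MeasurableSpace E] [StandardBorelSpace E] [Nonempty E]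
    (μ : Measure E) [IsProbabilityMeasure μ] : I → E :=
  μ.exists_measurable_map_eq.choose

theorem measurePreserving_sample {E : Type*} [MeasurableSpace E] [StandardBorelSpace E]
    [Nonempty E] (μ : Measure E) [IsProbabilityMeasure μ] :
    MeasurePreserving (sample μ) volume μ :=
  ⟨μ.exists_measurable_map_eq.choose_spec.1, μ.exists_measurable_map_eq.choose_spec.2⟩

@[fun_prop]
theorem measurable_sample {E : Type*} [MeasurableSpace E] [StandardBorelSpace E] [Nonempty E]
    (μ : Measure E) [IsProbabilityMeasure μ] : Measurable (sample μ) :=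
  (measurePreserving_sample μ).measurable

/-- The index of the step recalled at step `n`, as a function of a uniform seed: it is uniform on
`{1, …, n - 1}` if `2 ≤ n`, and equal to `1` otherwise. -/
noncomputable def recallTime (n : ℕ) (t : I) : ℕ :=
  sample (uniformOn (Set.univ : Set (Fin (n - 2 + 1)))) t + 1

@[fun_prop]
theorem measurable_recallTime (n : ℕ) : Measurable (recallTime n) :=
  (measurable_of_countable fun k : Fin (n - 2 + 1) => (k : ℕ) + 1).comp (measurable_sample _)

theorem one_le_recallTime (n : ℕ) (t : I) : 1 ≤ recallTime n t :=
  Nat.le_add_left 1 _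

theorem recallTime_lt {n : ℕ} (hn : 2 ≤ n) (t : I) : recallTime n t < n := by
  unfold recallTime
  lia

theorem volume_recallTime_eq {n k : ℕ} (hk : 1 ≤ k) (hkn : k < n) :
    volume {t | recallTime n t = k} = ((n - 1 : ℕ) : ℝ≥0∞)⁻¹ := by
  have event_eq : {t | recallTime n t = k}
      = sample (uniformOn Set.univ) ⁻¹' {(⟨k - 1, by lia⟩ : Fin (n - 2 + 1))} := by
    ext t
    simp only [recallTime, Set.mem_ofPred_eq, Set.mem_preimage, Set.mem_singleton_iff, Fin.ext_iff]
    lia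
  rw [event_eq, (measurePreserving_sample _).measure_preimage
      (measurableSet_singleton _).nullMeasurableSet,
    uniformOn_univ, Measure.count_singleton, Fintype.card_fin, one_div]
  congr 2
  lia

theorem volume_recallTime_sub_one_eq {n k : ℕ} (hk : k < n + 1) :
    volume {t | recallTime (n + 2) t - 1 = k} = ((n + 1 : ℕ) : ℝ≥0∞)⁻¹ := by
  have event_eq : {t | recallTime (n + 2) t - 1 = k} = {t | recallTime (n + 2) t = k + 1} := by
    ext t
    have := one_le_recallTime (n + 2) t
    simp only [Set.mem_ofPred_eq]
    lia
  exact event_eq ▸ volume_recallTime_eq k.succ_pos (Nat.succ_lt_succ hk)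

/-- The four sources of randomness of a step: the reinforcement coin, the choice of the recalled
step, the fresh step and the noise in the transformation. -/
inductive Source
  | coin
  | memory
  | fresh
  | noise

/-- One seed in the unit interval for every step and every source of randomness. -/
abbrev Seeds : Type := ℕ → Source → I

/-- The law of the independent uniform seeds of a single step. -/
noncomputable abbrev stepSeedMeasure : Measure (Source → I) := Measure.infinitePi fun _ => volume

/-- The law of independent uniform seeds. -/
noncomputable def seedMeasure : Measure Seeds := Measure.infinitePi fun _ => stepSeedMeasure

instance : IsProbabilityMeasure seedMeasure := by
  unfold seedMeasure
  infer_instance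

theorem measurePreserving_stepSeed (s : Source) :
    MeasurePreserving (fun t : Source → I => t s) stepSeedMeasure volume :=
  measurePreserving_eval_infinitePi (fun _ : Source => (volume : Measure I)) s

theorem iIndepFun_stepSeeds : iIndepFun (fun (s : Source) t => t s) stepSeedMeasure :=
  iIndepFun_infinitePi (X := fun _ t => t) fun _ => measurable_id

theorem measurePreserving_seed (n : ℕ) (s : Source) :
    MeasurePreserving (fun b : Seeds => b n s) seedMeasure volume :=
  (measurePreserving_stepSeed s).comp
    (measurePreserving_eval_infinitePi (fun _ : ℕ => stepSeedMeasure) n)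

theorem iIndepFun_seeds {Ω : Type*} [MeasurableSpace Ω] {P : Measure Ω} [IsProbabilityMeasure P]
    {S : Ω → Seeds} (hS : MeasurePreserving S P seedMeasure) :
    iIndepFun (fun (i : ℕ × Source) ω => S ω i.1 i.2) P := by
  have hseed (i : ℕ × Source) := (measurePreserving_seed i.1 i.2).comp hS
  have joint_law : seedMeasure.map (fun (b : Seeds) (i : ℕ × Source) => b i.1 i.2)
      = Measure.infinitePi fun i : ℕ × Source => seedMeasure.map fun b => b i.1 i.2 :=
    (iIndepFun_uncurry_infinitePi' (X := fun _ _ t => t) (fun _ _ => (volume : Measure I))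
      fun _ _ => measurable_id).map_fun_eq_infinitePi_map fun _ => by fun_prop
  refine (iIndepFun_iff_map_fun_eq_infinitePi_map fun i => (hseed i).measurable).2 ?_
  calc P.map (fun ω (i : ℕ × Source) => S ω i.1 i.2)
      = (P.map S).map fun (b : Seeds) (i : ℕ × Source) => b i.1 i.2 :=
        (Measure.map_map (g := fun (b : Seeds) (i : ℕ × Source) => b i.1 i.2)
          (by fun_prop) hS.measurable).symm
    _ = Measure.infinitePi fun i : ℕ × Source => seedMeasure.map fun b => b i.1 i.2 := by
        rw [hS.map_eq, joint_law]
    _ = Measure.infinitePi fun i : ℕ × Source => P.map fun ω => S ω i.1 i.2 := by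
        congr 1
        exact funext fun i =>
          (measurePreserving_seed i.1 i.2).map_eq.trans (hseed i).map_eq.symm

end UniformSeeds

section SeededWalk

variable {G E : Type*} [MeasurableSpace G] [Countable G] [MeasurableSingletonClass G] [Nonempty G]
  [MeasurableSpace E] [Countable E] [MeasurableSingletonClass E] [Nonempty E]
  (α : I) (μ : Measure G) [IsProbabilityMeasure μ] (ν : Measure E) [IsProbabilityMeasure ν]
  (τ : E → G → G)

/-- The steps, indexed from `1`, of the generalized step-reinforced random walk driven by the
seeds `b`, whose `n`-th transformation is `τ` with `ν`-distributed noise. -/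
noncomputable def seededWalk (b : Seeds) (n : ℕ) : G :=
  if _ : 2 ≤ n ∧ coin α (b n .coin) = true then
    τ (sample ν (b n .noise)) (seededWalk b (recallTime n (b n .memory)))
  else sample μ (b n .fresh)
termination_by n
decreasing_by exact recallTime_lt (by tauto) _

theorem seededWalk_of_lt_two (b : Seeds) {n : ℕ} (hn : n < 2) :
    seededWalk α μ ν τ b n = sample μ (b n .fresh) := by
  rw [seededWalk, dif_neg (by lia)]

theorem seededWalk_of_two_le (b : Seeds) {n : ℕ} (hn : 2 ≤ n) :
    seededWalk α μ ν τ b n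
      = if coin α (b n .coin) then
          τ (sample ν (b n .noise)) (seededWalk α μ ν τ b (recallTime n (b n .memory)))
        else sample μ (b n .fresh) := by
  rw [seededWalk]
  simp only [hn, true_and, dite_eq_ite]

theorem measurable_seededWalk (n : ℕ) : Measurable fun b => seededWalk α μ ν τ b n := by
  induction n using Nat.strong_induction_on with
  | _ n ih =>
    rcases lt_or_ge n 2 with hn | hn
    · simp only [seededWalk_of_lt_two α μ ν τ _ hn]
      fun_prop
    have truncated : Measurable fun a : ℕ × Seeds =>
        if a.1 < n then seededWalk α μ ν τ a.2 a.1 else Classical.arbitrary G := by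
      refine measurable_from_prod_countable_right fun k => ?_
      by_cases hk : k < n
      · simpa only [hk, if_true] using ih k hk
      · simpa only [hk, if_false] using measurable_const
    have recalled :
        Measurable fun b => seededWalk α μ ν τ b (recallTime n (b n .memory)) := by
      have := truncated.comp (f := fun b : Seeds => (recallTime n (b n .memory), b)) (by fun_prop)
      simpa only [Function.comp_def, recallTime_lt hn, if_true] using this
    have transformed := (measurable_of_countable (Function.uncurry τ)).comp (f := fun b : Seeds =>
      (sample ν (b n .noise), seededWalk α μ ν τ b (recallTime n (b n .memory)))) (by fun_prop)
    simp only [seededWalk_of_two_le α μ ν τ _ hn]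
    have measurableSet_heads : MeasurableSet {b : Seeds | coin α (b n .coin) = true} :=
      measurableSet_eq_fun (by fun_prop) measurable_const
    exact Measurable.ite measurableSet_heads transformed (by fun_prop)

variable {Ω : Type*} [MeasurableSpace Ω] {P : Measure Ω} [IsProbabilityMeasure P] {S : Ω → Seeds}

theorem isDriving_seeds (hS : MeasurePreserving S P seedMeasure) :
    IsDriving P α μ (fun n ω => coin α (S ω n .coin)) (fun n ω => recallTime n (S ω n .memory))
      (fun n ω => sample μ (S ω n .fresh)) := by
  have hseed (n : ℕ) (s : Source) := (measurePreserving_seed n s).comp hS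
  have measurable_seeds := hS.measurable
  refine
    { meas_ξ := by fun_prop
      meas_u := by fun_prop
      meas_g := by fun_prop
      ξ_law := fun n _ => ?_
      u_range := fun n hn ω => ⟨one_le_recallTime n _, recallTime_lt hn _⟩
      u_law := fun n _ k hk hkn => ?_
      g_law := fun n _ => ((measurePreserving_sample μ).comp (hseed n .fresh)).map_eq
      indep := ?_ }
  · rw [← volume_coin_eq_true α]
    exact (hseed n .coin).measure_preimage
      (measurable_coin α (measurableSet_singleton true)).nullMeasurableSet
  · rw [← volume_recallTime_eq hk hkn]
    exact (hseed n .memory).measure_preimage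
      (measurable_recallTime n (measurableSet_singleton k)).nullMeasurableSet
  let source : ℕ ⊕ ℕ ⊕ ℕ → ℕ × Source :=
    Sum.elim (·, .coin) (Sum.elim (·, .memory) (·, .fresh))
  have source_injective : source.Injective := by
    rintro (i | i | i) (j | j | j) <;> simp [source]
  let value : ℕ ⊕ ℕ ⊕ ℕ → I → Bool ⊕ ℕ ⊕ G :=
    fam (fun _ => coin α) recallTime fun _ => sample μ
  have measurable_value (i) : Measurable (value i) := by
    rcases i with i | i | i
    · exact measurable_inl.comp (measurable_coin α)
    · exact measurable_inr.comp (measurable_inl.comp (measurable_recallTime i))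
    · exact measurable_inr.comp (measurable_inr.comp (measurePreserving_sample μ).measurable)
  convert ((iIndepFun_seeds hS).precomp source_injective).comp value measurable_value using 1
  ext (i | i | i) ω <;> rfl

theorem indepFun_future_noise (hS : MeasurePreserving S P seedMeasure) (n : ℕ) :
    IndepFun
      (fun ω (k : {k : ℕ // n ≤ k}) =>
        (coin α (S ω k .coin), recallTime k (S ω k .memory), sample μ (S ω k .fresh)))
      (fun ω => τ (sample ν (S ω n .noise))) P := by
  have disjoint : Disjoint {i : ℕ × Source | i.2 ≠ .noise} {(n, .noise)} := by simp
  have indep := indepFun_domRestrict_of_disjoint (iIndepFun_seeds hS)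
    (fun i => ((measurePreserving_seed i.1 i.2).comp hS).measurable) disjoint
  have measurable_future :
      Measurable fun (a : {i : ℕ × Source | i.2 ≠ .noise} → I) (k : {k : ℕ // n ≤ k}) =>
        (coin α (a ⟨(k, .coin), by simp⟩), recallTime k (a ⟨(k, .memory), by simp⟩),
          sample μ (a ⟨(k, .fresh), by simp⟩)) :=
    by fun_prop
  have measurable_transformation :
      Measurable fun a : ({(n, .noise)} : Set (ℕ × Source)) → I => τ (sample ν (a ⟨_, rfl⟩)) :=
    measurable_pi_lambda _ fun r => (measurable_of_countable (τ · r)).comp (by fun_prop)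
  exact indep.comp measurable_future measurable_transformation

theorem isGenSRRW_seededWalk (hS : MeasurePreserving S P seedMeasure) {X : ℕ → Ω → G}
    (hX : ∀ n, 1 ≤ n → ∀ ω, X n ω = seededWalk α μ ν τ (S ω) n) :
    IsGenSRRW P α μ (fun n ω => τ (sample ν (S ω n .noise))) X := by
  refine ⟨_, _, _, isDriving_seeds α μ hS, fun n => ?_, fun n _ =>
    indepFun_future_noise α μ ν τ hS n, fun ω => ?_, fun n hn ω => ?_⟩
  · have measurable_seeds := hS.measurable
    exact (measurable_of_countable (Function.uncurry τ)).comp (f := fun a : Ω × G =>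
      (sample ν (S a.1 n .noise), a.2)) (by fun_prop)
  · rw [hX 1 le_rfl, seededWalk_of_lt_two α μ ν τ _ one_lt_two]
  · rw [hX n (by lia), hX _ (one_le_recallTime n _), seededWalk_of_two_le α μ ν τ _ hn]

end SeededWalk

section SeededWalkLaw

variable {G E : Type*} [MeasurableSpace G] [MeasurableSpace E] (α : I) (μ : Measure G)
  (ν : Measure E) (τ : E → G → G)

/-- The law of a step of the generalized step-reinforced random walk, given that the step recalled
from the past is `r`. -/
noncomputable def reinforcedStepLaw (r : G) : Measure G :=
  ENNReal.ofReal α • ν.map (τ · r) + ENNReal.ofReal (1 - α) • μ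

theorem nextStepLaw_reinforcedStepLaw_succ (x : ℕ → G) (n : ℕ) :
    nextStepLaw μ (reinforcedStepLaw α μ ν τ) x (n + 1)
      = ENNReal.ofReal α • nextStepLaw μ (fun r => ν.map (τ · r)) x (n + 1)
        + ENNReal.ofReal (1 - α) • μ := by
  have cancel : ((n + 1 : ℕ) : ℝ≥0∞)⁻¹ * (n + 1 : ℕ) = 1 :=
    ENNReal.inv_mul_cancel (by exact_mod_cast n.succ_ne_zero) (ENNReal.natCast_ne_top _)
  simp only [nextStepLaw, reinforcedStepLaw, Finset.sum_add_distrib, Finset.sum_const,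
    Finset.card_range, smul_add, ← Finset.smul_sum]
  rw [smul_comm, ← Nat.cast_smul_eq_nsmul ℝ≥0∞ (n + 1),
    smul_smul (_⁻¹), cancel, one_smul]

variable [MeasurableSingletonClass G] [Countable E] [MeasurableSingletonClass E] [Nonempty E]
  [IsProbabilityMeasure ν]

theorem stepSeedMeasure_recalled_eq (x : ℕ → G) (n : ℕ) (y : G) :
    stepSeedMeasure
        {t | τ (sample ν (t .noise)) (x (recallTime (n + 2) (t .memory) - 1)) = y}
      = nextStepLaw μ (fun r => ν.map (τ · r)) x (n + 1) {y} := by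
  have measurable_index : Measurable fun u => recallTime (n + 2) u - 1 :=
    (measurable_recallTime _).sub_const 1
  have index_mem (u : I) : recallTime (n + 2) u - 1 ∈ Finset.range (n + 1) := by
    have := recallTime_lt (show 2 ≤ n + 2 by lia) u
    exact Finset.mem_range.2 (by lia)
  have indep := (iIndepFun_stepSeeds.indepFun (show Source.memory ≠ .noise by simp)).comp
    measurable_index (measurable_sample ν)
  have measurable_transformed (r : G) : Measurable fun e => τ e r := measurable_of_countable _
  have sum_eq := measure_mem_eq_sum_of_indepFun indep
    (measurable_index.comp (measurable_pi_apply _)) (fun t => index_mem (t .memory))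
    (A := fun k => (τ · (x k)) ⁻¹' {y})
    fun k => measurable_transformed _ (measurableSet_singleton y)
  refine sum_eq.trans ?_
  rw [nextStepLaw, Measure.smul_apply, Measure.finsetSum_apply, smul_eq_mul, Finset.mul_sum]
  refine Finset.sum_congr rfl fun k hk => ?_
  congr 1
  · rw [← volume_recallTime_sub_one_eq (Finset.mem_range.1 hk)]
    exact (measurePreserving_stepSeed _).measure_preimage
      (measurable_index (measurableSet_singleton k)).nullMeasurableSet
  · rw [Measure.map_apply (measurable_transformed _) (measurableSet_singleton y)]
    exact ((measurePreserving_sample ν).comp (measurePreserving_stepSeed _)).measure_preimage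
      (measurable_transformed _ (measurableSet_singleton y)).nullMeasurableSet

variable [Countable G] [Nonempty G] [IsProbabilityMeasure μ]

/-- The step `n + 1` of the seeded walk, as a function of its seeds `t` and of the preceding steps
`x 0, …, x (n - 1)`. -/
noncomputable def seededStep (n : ℕ) (t : Source → I) (x : ℕ → G) : G :=
  if 1 ≤ n ∧ coin α (t .coin) = true then
    τ (sample ν (t .noise)) (x (recallTime (n + 1) (t .memory) - 1))
  else sample μ (t .fresh)

theorem seededWalk_succ (b : Seeds) (n : ℕ) :
    seededWalk α μ ν τ b (n + 1)
      = seededStep α μ ν τ n (b (n + 1)) fun k => seededWalk α μ ν τ b (k + 1) := by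
  rw [seededWalk, seededStep, Nat.sub_add_cancel (one_le_recallTime _ _)]
  simp only [Nat.reduceLeDiff, dite_eq_ite]

theorem dependsOn_seededStep (n : ℕ) (t : Source → I) :
    DependsOn (seededStep α μ ν τ n t) (Set.Iio n) := by
  intro x y hxy
  unfold seededStep
  split_ifs with h
  · have := recallTime_lt (n := n + 1) (by lia) (t .memory)
    have := one_le_recallTime (n + 1) (t .memory)
    rw [hxy _ (show recallTime (n + 1) (t .memory) - 1 < n by lia)]
  · rfl

theorem measurable_seededStep (n : ℕ) (x : ℕ → G) :
    Measurable fun t => seededStep α μ ν τ n t x := by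
  have measurableSet_reinforced :
      MeasurableSet {t : Source → I | 1 ≤ n ∧ coin α (t .coin) = true} :=
    (MeasurableSet.const _).inter (measurableSet_eq_fun (by fun_prop) measurable_const)
  refine Measurable.ite measurableSet_reinforced ?_ (by fun_prop)
  exact (measurable_of_countable fun a : E × ℕ => τ a.1 (x (a.2 - 1))).comp
    (f := fun t : Source → I => (sample ν (t .noise), recallTime (n + 1) (t .memory))) (by fun_prop)

theorem stepSeedMeasure_seededStep_succ_eq (x : ℕ → G) (n : ℕ) (y : G) :
    stepSeedMeasure {t | seededStep α μ ν τ (n + 1) t x = y}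
      = ENNReal.ofReal α * stepSeedMeasure
            {t | τ (sample ν (t .noise)) (x (recallTime (n + 2) (t .memory) - 1)) = y}
          + ENNReal.ofReal (1 - α) * stepSeedMeasure {t | sample μ (t .fresh) = y} := by
  have disjoint : Disjoint {Source.coin} {s : Source | s ≠ .coin} := by simp
  have indep := (indepFun_domRestrict_of_disjoint iIndepFun_stepSeeds
    (fun _ => measurable_pi_apply _) disjoint).comp
    (φ := fun a => coin α (a ⟨.coin, rfl⟩)) (by fun_prop) measurable_id
  let outcome : Bool → ({s : Source | s ≠ .coin} → I) → G
    | true => fun a => τ (sample ν (a ⟨.noise, by simp⟩))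
        (x (recallTime (n + 2) (a ⟨.memory, by simp⟩) - 1))
    | false => fun a => sample μ (a ⟨.fresh, by simp⟩)
  have measurable_outcome : ∀ c, Measurable (outcome c)
    | true => (measurable_of_countable fun e : E × ℕ => τ e.1 (x (e.2 - 1))).comp
        (f := fun a : {s : Source | s ≠ .coin} → I =>
          (sample ν (a ⟨.noise, by simp⟩), recallTime (n + 2) (a ⟨.memory, by simp⟩)))
        (by fun_prop)
    | false => by fun_prop
  have step_eq : {t | seededStep α μ ν τ (n + 1) t x = y}
      = {t | (fun s : {s : Source | s ≠ .coin} => t s) ∈ outcome (coin α (t .coin)) ⁻¹' {y}} := by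
    ext t
    cases h : coin α (t .coin) <;> simp [seededStep, outcome, h]
  have prob_coin (c : Bool) :
      stepSeedMeasure {t | coin α (t .coin) = c} = volume {t | coin α t = c} :=
    (measurePreserving_stepSeed _).measure_preimage
      (measurable_coin α (measurableSet_singleton c)).nullMeasurableSet
  rw [step_eq, ← volume_coin_eq_true, ← volume_coin_eq_false, ← prob_coin, ← prob_coin]
  exact (measure_mem_eq_sum_of_indepFun indep (by fun_prop) (fun _ => Finset.mem_univ _)
    fun c => measurable_outcome c (measurableSet_singleton y)).trans (Fintype.sum_bool _)

theorem stepSeedMeasure_seededStep_eq (x : ℕ → G) (n : ℕ) (y : G) :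
    stepSeedMeasure {t | seededStep α μ ν τ n t x = y}
      = nextStepLaw μ (reinforcedStepLaw α μ ν τ) x n {y} := by
  have fresh_eq : stepSeedMeasure {t | sample μ (t .fresh) = y} = μ {y} :=
    ((measurePreserving_sample μ).comp (measurePreserving_stepSeed _)).measure_preimage
      (measurableSet_singleton y).nullMeasurableSet
  cases n with
  | zero => simpa [seededStep, nextStepLaw] using fresh_eq
  | succ n =>
    rw [stepSeedMeasure_seededStep_succ_eq, stepSeedMeasure_recalled_eq μ, fresh_eq,
      nextStepLaw_reinforcedStepLaw_succ]
    rfl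

theorem isReinforcedLaw_seededWalk :
    IsReinforcedLaw μ (reinforcedStepLaw α μ ν τ)
      (seedMeasure.map fun b n => seededWalk α μ ν τ b (n + 1)) := by
  intro x n
  have measurable_step (j : ℕ) := measurable_seededStep α μ ν τ j x
  have indep : iIndepFun (fun j (b : Seeds) => seededStep α μ ν τ j (b (j + 1)) x) seedMeasure := by
    simpa only [seedMeasure, Nat.add_sub_cancel] using
      (iIndepFun_infinitePi (P := fun _ => stepSeedMeasure)
        fun j => measurable_step (j - 1)).precomp (add_left_injective 1)
  have path_measurable : Measurable fun b n => seededWalk α μ ν τ b (n + 1) :=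
    measurable_pi_lambda _ fun k => measurable_seededWalk α μ ν τ (k + 1)
  rw [Measure.map_apply path_measurable (measurableSet_piNat_cylinder x n)]
  refine (measure_cylinder_of_recursion (fun n b => seededWalk_succ α μ ν τ b n)
    (fun n b => dependsOn_seededStep α μ ν τ n (b (n + 1))) indep n).trans
      (Finset.prod_congr rfl fun j _ => ?_)
  rw [← stepSeedMeasure_seededStep_eq]
  exact (measurePreserving_eval_infinitePi (fun _ : ℕ => stepSeedMeasure) (j + 1)).measure_preimage
    (measurable_step j (measurableSet_singleton _)).nullMeasurableSet

end SeededWalkLaw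

section ZerothStep

variable {Ω Ω' G : Type*} [MeasurableSpace Ω] [MeasurableSpace Ω'] [MeasurableSpace G]
  {P : Measure Ω} [IsProbabilityMeasure P]

theorem exists_map_prodMk_eq {E F : Type*} [MeasurableSpace E] [MeasurableSpace F]
    [StandardBorelSpace F] [Nonempty F] (Y : Ω → E) {Z : Ω → F} (hZ : Measurable Z) :
    ∃ φ : E → I → F, Measurable (Function.uncurry φ) ∧
      ((P.map Y).prod volume).map (fun a => (a.1, φ a.1 a.2)) = P.map fun ω => (Y ω, Z ω) := by
  obtain ⟨φ, hφ, hφ_law⟩ := Kernel.exists_measurable_map_eq_unitInterval (condDistrib Z Y P)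
  refine ⟨φ, hφ, ?_⟩
  rw [← compProd_map_condDistrib hZ.aemeasurable]
  ext A hA
  have hpair : Measurable fun a : E × I => (a.1, φ a.1 a.2) := measurable_fst.prodMk hφ
  rw [Measure.map_apply hpair hA, Measure.prod_apply (hpair hA), Measure.compProd_apply hA]
  refine lintegral_congr fun y => ?_
  rw [← hφ_law, Measure.map_apply hφ.of_uncurry_left (measurable_prodMk_left hA)]
  rfl

theorem exists_map_path_eq [StandardBorelSpace G] [Nonempty G] {X : ℕ → Ω → G}
    (hX : ∀ n, Measurable (X n)) {m : Measure Ω'} [IsProbabilityMeasure m] {W : Ω' → ℕ → G}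
    (hW : Measurable W) (hlaw : P.map (fun ω k => X (k + 1) ω) = m.map W) :
    ∃ X' : ℕ → Ω' × I → G, (∀ n a, X' (n + 1) a = W a.1 n) ∧
      P.map (fun ω n => X n ω) = (m.prod volume).map fun a n => X' n a := by
  obtain ⟨φ, hφ, hφ_law⟩ := exists_map_prodMk_eq (P := P) (fun ω k => X (k + 1) ω) (hX 0)
  let cons (a : (ℕ → G) × G) (n : ℕ) : G := n.casesOn a.2 a.1
  have measurable_cons : Measurable cons := measurable_pi_lambda _ fun n => by
    cases n
    · exact measurable_snd
    · exact (measurable_pi_apply _).comp measurable_fst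
  have measurable_tail : Measurable fun ω k => X (k + 1) ω :=
    measurable_pi_lambda _ fun k => hX (k + 1)
  have measurable_pair : Measurable fun a : (ℕ → G) × I => (a.1, φ a.1 a.2) :=
    measurable_fst.prodMk hφ
  refine ⟨fun n a => cons (W a.1, φ (W a.1) a.2) n, fun n a => rfl, ?_⟩
  calc P.map (fun ω n => X n ω)
      = P.map (cons ∘ fun ω => (fun k => X (k + 1) ω, X 0 ω)) := by
        congr
        ext ω (_ | n) <;> rfl
    _ = (((m.map W).prod volume).map fun a => (a.1, φ a.1 a.2)).map cons := by
        rw [← hlaw, hφ_law, Measure.map_map measurable_cons (measurable_tail.prodMk (hX 0))]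
    _ = (m.prod volume).map (cons ∘ (fun a => (a.1, φ a.1 a.2)) ∘ Prod.map W id) := by
        rw [← Measure.map_id (μ := (volume : Measure I)), Measure.map_prod_map _ _ hW measurable_id,
          Measure.map_id, Measure.map_map measurable_pair (hW.prodMap measurable_id),
          Measure.map_map measurable_cons (measurable_pair.comp (hW.prodMap measurable_id))]

end ZerothStep

theorem exists_isGenSRRW_of_isReinforcedLaw {Ω G E : Type*} [MeasurableSpace Ω]
    [MeasurableSpace G] [Countable G] [MeasurableSingletonClass G]
    [MeasurableSpace E] [Countable E] [MeasurableSingletonClass E] [Nonempty E]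
    {α : I} {μ : Measure G} [IsProbabilityMeasure μ] {ν : Measure E} [IsProbabilityMeasure ν]
    {τ : E → G → G} {P : Measure Ω} [IsProbabilityMeasure P] {X : ℕ → Ω → G}
    (hX : ∀ n, Measurable (X n))
    (hlaw : IsReinforcedLaw μ (reinforcedStepLaw α μ ν τ) (P.map fun ω k => X (k + 1) ω)) :
    ∃ (Ω' : Type) (_ : MeasurableSpace Ω') (P' : Measure Ω') (X' : ℕ → Ω' → G)
      (Y : ℕ → Ω' → E), IsProbabilityMeasure P' ∧ (∀ n, Measurable (Y n)) ∧ iIndepFun Y P' ∧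
        (∀ n, P'.map (Y n) = ν) ∧ IsGenSRRW P' α μ (fun n ω => τ (Y n ω)) X' ∧
        P.map (fun ω n => X n ω) = P'.map fun ω n => X' n ω := by
  have : Nonempty G := μ.nonempty_of_neZero
  have tail_law := hlaw.unique (isReinforcedLaw_seededWalk α μ ν τ)
  obtain ⟨X', X'_succ, path_law⟩ := exists_map_path_eq hX
    (measurable_pi_lambda _ fun n => measurable_seededWalk α μ ν τ (n + 1)) tail_law
  have hS : MeasurePreserving Prod.fst (seedMeasure.prod (volume : Measure I)) seedMeasure :=
    measurePreserving_fst
  have hnoise (n : ℕ) :=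
    (measurePreserving_sample ν).comp ((measurePreserving_seed n .noise).comp hS)
  refine ⟨Seeds × I, inferInstance, seedMeasure.prod volume, X',
    fun n a => sample ν (a.1 n .noise), inferInstance, fun n => (hnoise n).measurable, ?_,
    fun n => (hnoise n).map_eq, isGenSRRW_seededWalk α μ ν τ hS fun n hn a => ?_, path_law⟩
  · exact ((iIndepFun_seeds hS).precomp (Prod.mk_left_injective Source.noise)).comp
      (fun _ => sample ν) fun _ => measurable_sample ν
  · obtain ⟨k, rfl⟩ := Nat.exists_eq_add_of_le' hn
    exact X'_succ k a

section Elephant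

variable {Ω G E : Type*} [MeasurableSpace Ω] [MeasurableSpace G] [Countable G]
  [MeasurableSingletonClass G] [MeasurableSpace E] [Countable E] [MeasurableSingletonClass E]
  {P : Measure Ω} [IsProbabilityMeasure P] {Γ : Finset G} {X : ℕ → Ω → G}

theorem IsERW.exists_isGenSRRW {α a : ℝ} (hα : α ∈ I) (ha : a ∈ I)
    (hX : IsERW P (α * a + (1 - α) * (Γ.card : ℝ)⁻¹) Γ X)
    {ν : Measure E} [IsProbabilityMeasure ν] {τ : E → G → G}
    (hτ : ∀ r ∈ Γ, ν.map (τ · r) = elephantKernel a Γ r) :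
    ∃ (Ω' : Type) (_ : MeasurableSpace Ω') (P' : Measure Ω') (X' : ℕ → Ω' → G)
      (Y : ℕ → Ω' → E), IsProbabilityMeasure P' ∧ (∀ n, Measurable (Y n)) ∧ iIndepFun Y P' ∧
        (∀ n, P'.map (Y n) = ν) ∧
        IsGenSRRW P' α (uniformOn (Γ : Set G)) (fun n ω => τ (Y n ω)) X' ∧
        P.map (fun ω n => X n ω) = P'.map fun ω n => X' n ω := by
  obtain ⟨ω⟩ := P.nonempty_of_neZero
  have nonempty : Γ.Nonempty := ⟨X 1 ω, hX.mem_steps 1 le_rfl ω⟩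
  have inv_card_mem : (Γ.card : ℝ)⁻¹ ∈ I :=
    ⟨by positivity, inv_le_one_of_one_le₀ (by exact_mod_cast nonempty.card_pos)⟩
  have := isProbabilityMeasure_uniformOn Γ.finite_toSet nonempty
  have := ν.nonempty_of_neZero
  have p_mem : α * a + (1 - α) * (Γ.card : ℝ)⁻¹ ∈ I :=
    (convex_Icc 0 1) ha inv_card_mem hα.1 (sub_nonneg.2 hα.2) (add_sub_cancel _ _)
  refine exists_isGenSRRW_of_isReinforcedLaw (α := ⟨α, hα⟩) hX.meas
    (hX.isReinforcedLaw p_mem fun r hr => ?_)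
  rw [reinforcedStepLaw, hτ r hr, ← elephantKernel_inv_card hr,
    elephantKernel_convex_combination hα ha inv_card_mem]

theorem IsERW.exists_isSRRW {α : ℝ} (hα : α ∈ I)
    (hX : IsERW P (α + (1 - α) * (Γ.card : ℝ)⁻¹) Γ X) :
    ∃ (Ω' : Type) (_ : MeasurableSpace Ω') (P' : Measure Ω') (X' : ℕ → Ω' → G),
      IsProbabilityMeasure P' ∧ IsSRRW P' α (uniformOn (Γ : Set G)) X' ∧
        P.map (fun ω n => X n ω) = P'.map fun ω n => X' n ω := by
  replace hX : IsERW P (α * 1 + (1 - α) * (Γ.card : ℝ)⁻¹) Γ X := by rwa [mul_one]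
  have hτ (r : G) (_ : r ∈ Γ) :
      (Measure.dirac ()).map (fun _ => id r) = elephantKernel 1 Γ r := by
    simp [elephantKernel_one]
  obtain ⟨Ω', _, P', X', -, hP', -, -, -, hX', path_law⟩ :=
    hX.exists_isGenSRRW hα unitInterval.one_mem (τ := fun _ => id) hτ
  exact ⟨Ω', _, P', X', hP', hX', path_law⟩

end Elephant

section Rotation

variable {G : Type*} {d : ℕ}

theorem map_uniformOn_of_injective {E : Type*} [MeasurableSpace E] [MeasurableSpace G]
    [MeasurableSingletonClass E] [MeasurableSingletonClass G] {f : E → G} (hf : Measurable f)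
    (hinj : Function.Injective f) {s : Set E} (hs : s.Finite) :
    (uniformOn s).map f = uniformOn (f '' s) := by
  ext A hA
  rw [Measure.map_apply hf hA, uniformOn, uniformOn, cond_apply hs.measurableSet,
    cond_apply (hs.image f).measurableSet, ← Set.image_inter_preimage,
    Measure.count_injective_image hinj, Measure.count_injective_image hinj]

theorem finRotate_pow_apply (i j : Fin d) : (finRotate d ^ (j : ℕ)) i = i + j := by
  rw [← Equiv.Perm.iterate_eq_pow, ← finCycle_eq_finRotate_iterate, finCycle_apply]

/-- The permutation `g_i ↦ g_{σ^k(i)}` of the enumerated steps, where `σ` is the cyclic rotation of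
the indices, extended by the identity to the elements that are not steps. -/
noncomputable def rotateSteps (gen : Fin d → G) (k : ℕ) : G → G :=
  Function.extend gen (fun i => gen ((finRotate d ^ k) i)) id

theorem rotateSteps_apply {gen : Fin d → G} (hgen : Function.Injective gen) (k : ℕ) (i : Fin d) :
    rotateSteps gen k (gen i) = gen ((finRotate d ^ k) i) :=
  hgen.extend_apply _ _ i

theorem map_rotateSteps [NeZero d] [MeasurableSpace G] [MeasurableSingletonClass G]
    {gen : Fin d → G} (hgen : Function.Injective gen) (i : Fin d) :
    (uniformOn (Set.univ : Set {j : Fin d // j ≠ 0})).map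
      (fun j => rotateSteps gen j.1 (gen i)) = uniformOn (Set.range gen \ {gen i}) := by
  simp only [rotateSteps_apply hgen, finRotate_pow_apply]
  have injective : Function.Injective fun j : {j : Fin d // j ≠ 0} => gen (i + j.1) :=
    hgen.comp ((add_right_injective i).comp Subtype.val_injective)
  rw [map_uniformOn_of_injective (measurable_of_finite _) injective Set.finite_univ]
  congr 1
  ext s
  simp only [Set.image_univ, Set.mem_range, Set.mem_sdiff, Set.mem_singleton_iff]
  constructor
  · rintro ⟨j, rfl⟩
    exact ⟨⟨_, rfl⟩, fun h => j.2 (add_eq_left.1 (hgen h))⟩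
  · rintro ⟨⟨j, rfl⟩, hj⟩
    exact ⟨⟨j - i, sub_ne_zero.2 fun h => hj (congrArg gen h)⟩,
      congrArg gen (add_sub_cancel i j)⟩

theorem uniformOn_univ_ne_zero_val_eq [NeZero d] {k : ℕ} (hk : 1 ≤ k) (hkd : k ≤ d - 1) :
    uniformOn (Set.univ : Set {j : Fin d // j ≠ 0}) {j | j.1 = k}
      = ((d - 1 : ℕ) : ℝ≥0∞)⁻¹ := by
  have singleton : {j : {j : Fin d // j ≠ 0} | j.1 = k}
      = {⟨⟨k, by omega⟩, Fin.ne_of_val_ne (Nat.ne_of_gt hk)⟩} := by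
    ext j
    simp [Subtype.ext_iff, Fin.ext_iff]
  rw [singleton, uniformOn_univ, Measure.count_singleton, Fintype.card_subtype_compl,
    Fintype.card_fin, Fintype.card_subtype_eq, one_div]

theorem IsERW.exists_isGenSRRW_rotateSteps {Ω : Type*} [MeasurableSpace Ω] [MeasurableSpace G]
    [Countable G] [MeasurableSingletonClass G] {P : Measure Ω} [IsProbabilityMeasure P]
    {Γ : Finset G} {X : ℕ → Ω → G} [NeZero d] [Nontrivial (Fin d)] {gen : Fin d → G}
    (hgen : Function.Injective gen) (range_gen : Set.range gen = Γ) {α : ℝ} (hα : α ∈ I)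
    (hX : IsERW P ((1 - α) * (Γ.card : ℝ)⁻¹) Γ X) :
    ∃ (Ω' : Type) (_ : MeasurableSpace Ω') (P' : Measure Ω') (X' : ℕ → Ω' → G)
      (Y : ℕ → Ω' → ℕ), IsProbabilityMeasure P' ∧ (∀ n, Measurable (Y n)) ∧
        (∀ n ω, 1 ≤ Y n ω ∧ Y n ω ≤ d - 1) ∧
        (∀ n k, 1 ≤ k → k ≤ d - 1 → P' {ω | Y n ω = k} = ((d - 1 : ℕ) : ℝ≥0∞)⁻¹) ∧
        iIndepFun Y P' ∧
        IsGenSRRW P' α (uniformOn (Γ : Set G)) (fun n ω => rotateSteps gen (Y n ω)) X' ∧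
        P.map (fun ω n => X n ω) = P'.map fun ω n => X' n ω := by
  let Shift := {j : Fin d // j ≠ 0}
  have : Nonempty Shift := nonempty_subtype.2 (exists_ne 0)
  have : IsProbabilityMeasure (uniformOn (Set.univ : Set Shift)) :=
    isProbabilityMeasure_uniformOn Set.finite_univ Set.univ_nonempty
  rw [← zero_add (_ * _), ← mul_zero α] at hX
  have hτ (r : G) (hr : r ∈ Γ) :
      (uniformOn (Set.univ : Set Shift)).map (fun j => rotateSteps gen j.1 r)
        = elephantKernel 0 Γ r := by
    obtain ⟨i, rfl⟩ := range_gen.ge hr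
    rw [map_rotateSteps hgen, elephantKernel_zero, range_gen]
  obtain ⟨Ω', _, P', X', Y, hP', hY, Y_indep, Y_law, hX', path_law⟩ :=
    hX.exists_isGenSRRW hα unitInterval.zero_mem (τ := fun j : Shift => rotateSteps gen j.1) hτ
  have measurable_val : Measurable fun j : Shift => (j.1 : ℕ) := measurable_of_finite _
  refine ⟨Ω', _, P', X', fun n ω => (Y n ω).1, hP', fun n => measurable_val.comp (hY n),
    fun n ω => ⟨Nat.one_le_iff_ne_zero.2 (Fin.val_ne_zero_iff.2 (Y n ω).2),
      Nat.le_sub_one_of_lt (Y n ω).1.2⟩, fun n k hk hkd => ?_,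
    Y_indep.comp (fun _ j => (j.1 : ℕ)) fun _ => measurable_val, hX', path_law⟩
  rw [← uniformOn_univ_ne_zero_val_eq hk hkd, ← Y_law n,
    Measure.map_apply (hY n) (Set.toFinite _).measurableSet]
  rfl

end Rotation

theorem reinforcement_of_one_div_le {d p : ℝ} (hd : 1 < d) (hp : 1 / d ≤ p) (hp1 : p ≤ 1) :
    (d * p - 1) / (d - 1) ∈ I ∧
      p = (d * p - 1) / (d - 1) + (1 - (d * p - 1) / (d - 1)) * d⁻¹ := by
  have pred_pos : 0 < d - 1 := sub_pos.2 hd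
  rw [div_le_iff₀' (by positivity)] at hp
  refine ⟨⟨div_nonneg (by linarith) pred_pos.le, (div_le_one pred_pos).2 (by nlinarith)⟩, ?_⟩
  field_simp
  ring

theorem reinforcement_of_le_one_div {d p : ℝ} (hd : 0 < d) (hp0 : 0 ≤ p) (hp : p ≤ 1 / d) :
    1 - d * p ∈ I ∧ p = (1 - (1 - d * p)) * d⁻¹ := by
  rw [le_div_iff₀' hd] at hp
  refine ⟨⟨sub_nonneg.2 hp, sub_le_self _ (by positivity)⟩, ?_⟩
  field_simp
  ring

theorem countable_of_closure_eq_top {G : Type*} [Group G] {s : Set G} [Countable s]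
    (hs : Subgroup.closure s = ⊤) : Countable G := by
  rw [FreeGroup.closure_eq_range] at hs
  exact (MonoidHom.range_eq_top.1 hs).countable

end SRRW

theorem erw_is_generalized_srrw_general
    {G : Type*} [Countable G] [DecidableEq G] [MeasurableSpace G] [MeasurableSingletonClass G]
    {Ω : Type*} [MeasurableSpace Ω] (P : Measure Ω) [IsProbabilityMeasure P]
    (d : ℕ) (hd : 2 ≤ d) (gen : Fin d → G) (hinj : Function.Injective gen)
    (Γ : Finset G) (hΓ : ∀ s : G, s ∈ Γ ↔ ∃ i, gen i = s)
    (μ : Measure G) (hμ : ∀ s : G, μ {s} = if s ∈ Γ then ((d : ℕ) : ℝ≥0∞)⁻¹ else 0)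
    (p : ℝ) (hp0 : 0 ≤ p) (hp1 : p ≤ 1)
    (X : ℕ → Ω → G) (hX : IsERW P p Γ X) :
    ((1 : ℝ) / d ≤ p →
      ∃ (Ω' : Type) (_ : MeasurableSpace Ω') (P' : Measure Ω') (X' : ℕ → Ω' → G),
        IsProbabilityMeasure P' ∧
        IsSRRW P' ((d * p - 1) / (d - 1)) μ X' ∧
        P.map (fun ω => fun n : ℕ => X n ω)
          = P'.map (fun ω => fun n : ℕ => X' n ω)) ∧
    (p < (1 : ℝ) / d →
      ∃ (Ω' : Type) (_ : MeasurableSpace Ω') (P' : Measure Ω') (X' : ℕ → Ω' → G)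
        (T : ℕ → Ω' → G → G) (Y : ℕ → Ω' → ℕ),
        IsProbabilityMeasure P' ∧
        (∀ n, Measurable (Y n)) ∧
        (∀ n, 2 ≤ n → ∀ ω, 1 ≤ Y n ω ∧ Y n ω ≤ d - 1) ∧
        (∀ n, 2 ≤ n → ∀ k : ℕ, 1 ≤ k → k ≤ d - 1 →
          P' {ω | Y n ω = k} = ((d - 1 : ℕ) : ℝ≥0∞)⁻¹) ∧
        iIndepFun Y P' ∧
        (∀ n, 2 ≤ n → ∀ ω, ∀ i : Fin d,
          T n ω (gen i) = gen (((finRotate d) ^ (Y n ω)) i)) ∧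
        IsGenSRRW P' (1 - d * p) μ T X' ∧
        P.map (fun ω => fun n : ℕ => X n ω)
          = P'.map (fun ω => fun n : ℕ => X' n ω)) := by
  have range_gen : Set.range gen = Γ := Set.ext fun s => (hΓ s).symm
  obtain rfl : Γ.card = d := by
    rw [← Set.ncard_coe_finset, ← range_gen, Set.ncard_range_of_injective hinj, Nat.card_fin]
  obtain rfl : μ = uniformOn (Γ : Set G) := Measure.ext_of_singleton fun s => by
    rw [hμ, uniformOn_finset_singleton]
  have card_gt_one : (1 : ℝ) < Γ.card := by exact_mod_cast hd
  refine ⟨fun hp => ?_, fun hp => ?_⟩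
  · obtain ⟨α_mem, p_eq⟩ := reinforcement_of_one_div_le card_gt_one hp hp1
    exact IsERW.exists_isSRRW α_mem (p_eq ▸ hX)
  · have : NeZero Γ.card := ⟨by omega⟩
    have : Nontrivial (Fin Γ.card) := Fin.nontrivial_iff_two_le.2 hd
    obtain ⟨α_mem, p_eq⟩ := reinforcement_of_le_one_div (zero_lt_one.trans card_gt_one) hp0 hp.le
    obtain ⟨Ω', _, P', X', Y, hP', hY, Y_mem, Y_law, Y_indep, hX', path_law⟩ :=
      IsERW.exists_isGenSRRW_rotateSteps hinj range_gen α_mem (p_eq ▸ hX)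
    exact ⟨Ω', _, P', X', fun n ω => rotateSteps gen (Y n ω), Y, hP', hY, fun n _ => Y_mem n,
      fun n _ => Y_law n, Y_indep, fun n _ ω i => rotateSteps_apply hinj _ i, hX', path_law⟩

/-- **The elephant random walk is a generalized step-reinforced random walk.**
Let `Γ = {g₁, …, g_d}` (`d ≥ 2`) be a finite symmetric generating set of `G` and let
`X` be an ERW on `G_Γ` with memory parameter `p ∈ [0,1]`.  If `p ≥ 1/d`, then `X` has
the law of a usual SRRW with reinforcement parameter `α = (dp-1)/(d-1)` and step
distribution `μ` uniform on `Γ`.  If `p < 1/d`, then `X` has the law of a generalized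
SRRW with reinforcement parameter `α = 1 - dp`, step distribution `μ` uniform on `Γ`,
and transformations `T_n(g_i) = g_{σ^{Y_n}(i)}`, where `σ` is the cyclic rotation
`(1 2 ⋯ d)` and `(Y_n)_{n ≥ 2}` are i.i.d. uniform on `{1, …, d-1}` (so that `T_n(g_i)`
is uniform on `Γ \ {g_i}`). -/
theorem erw_is_generalized_srrw
    {G : Type*} [Group G] [DecidableEq G] [MeasurableSpace G] [MeasurableSingletonClass G]
    {Ω : Type*} [MeasurableSpace Ω] (P : Measure Ω) [IsProbabilityMeasure P]
    (d : ℕ) (hd : 2 ≤ d) (gen : Fin d → G) (hinj : Function.Injective gen)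
    (Γ : Finset G) (hΓ : ∀ s : G, s ∈ Γ ↔ ∃ i, gen i = s)
    (hsymm : ∀ s ∈ Γ, s⁻¹ ∈ Γ) (hgenerates : Subgroup.closure (Γ : Set G) = ⊤)
    (μ : Measure G) [IsProbabilityMeasure μ]
    (hμ : ∀ s : G, μ {s} = if s ∈ Γ then ((d : ℕ) : ℝ≥0∞)⁻¹ else 0)
    (p : ℝ) (hp0 : 0 ≤ p) (hp1 : p ≤ 1)
    (X : ℕ → Ω → G) (hX : IsERW P p Γ X) :
    ((1 : ℝ) / d ≤ p →
      ∃ (Ω' : Type) (_ : MeasurableSpace Ω') (P' : Measure Ω') (X' : ℕ → Ω' → G),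
        IsProbabilityMeasure P' ∧
        IsSRRW P' ((d * p - 1) / (d - 1)) μ X' ∧
        P.map (fun ω => fun n : ℕ => X n ω)
          = P'.map (fun ω => fun n : ℕ => X' n ω)) ∧
    (p < (1 : ℝ) / d →
      ∃ (Ω' : Type) (_ : MeasurableSpace Ω') (P' : Measure Ω') (X' : ℕ → Ω' → G)
        (T : ℕ → Ω' → G → G) (Y : ℕ → Ω' → ℕ),
        IsProbabilityMeasure P' ∧
        (∀ n, Measurable (Y n)) ∧
        (∀ n, 2 ≤ n → ∀ ω, 1 ≤ Y n ω ∧ Y n ω ≤ d - 1) ∧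
        (∀ n, 2 ≤ n → ∀ k : ℕ, 1 ≤ k → k ≤ d - 1 →
          P' {ω | Y n ω = k} = ((d - 1 : ℕ) : ℝ≥0∞)⁻¹) ∧
        iIndepFun Y P' ∧
        (∀ n, 2 ≤ n → ∀ ω, ∀ i : Fin d,
          T n ω (gen i) = gen (((finRotate d) ^ (Y n ω)) i)) ∧
        IsGenSRRW P' (1 - d * p) μ T X' ∧
        P.map (fun ω => fun n : ℕ => X n ω)
          = P'.map (fun ω => fun n : ℕ => X' n ω)) := by
  have := countable_of_closure_eq_top hgenerates
  exact erw_is_generalized_srrw_general P d hd gen hinj Γ hΓ μ hμ p hp0 hp1 X hX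
end
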